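/- Let n ≥ 2 and let X ⊆ ℂ^n be an open set with a smooth (C^∞) exhaustion function ρ : X → ℝ, and let M ∈ ℝ be such that at each point z of the set {z ∈ X : ρ(z) > M} the Levi form of ρ has at least 2 positive eigenvalues. Let d be a complete metric on X inducing the subspace topology of X. Given ε > 0, 0 < r < 1, and a continuous map f : 𝔻̄ → X which is holomorphic on 𝔻 and satisfies ρ(f(ζ)) > M for all ζ with |ζ| = 1, there exists a holomorphic map g : 𝔻 → X which is proper and satisfies: (i) d(g(ζ), f(ζ)) < ε for all |ζ| < r; (ii) g(0) = f(0); (iii) g′(0) = λ·f′(0) for some λ > 0. (This is the paper's Theorem 2 stated for domains in ℂ^n.) -/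

import Mathlib

open Metric

/-!
At a point `z₀` above level `M` the Levi form is positive on a two-dimensional space, which contains
a nonzero `v` in the kernel of `∂ρ`. A quadratic correction `q` compensates the non-hermitian part
of the second derivative of `ρ` in the direction `v` (if `∂ρ` vanishes at `z₀`, there need not be
such a `q`, but `v` can be chosen as a zero of that part), so that along the entire curve
`w η = t η v + t² η² q` the function `ρ` grows by about `c |η|²`, up to a small real-linear term.

Moving a boundary point `f ζ` of a disc along `w` by a holomorphic multiplier `k ζ` raises the disc
where `|k ζ|` is close to one, and costs little where `k ζ` is real and of the right sign. Cut the
circle into short arcs. First add spikes `(1 + A (1 - ζ)) ^ (-α)`, which are nearly real, at the end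
points of the arcs; then push on the arcs by powers of the square of a conformal map onto a half
disc, which are unimodular on the arc and real and nonnegative on the rest of the circle. The
spikes make up for what is missing near the end points, where these powers change abruptly. A factor
`ζ ^ 2` in every multiplier preserves `f 0` and `f' 0`. Finitely many such steps raise the boundary
of the disc past any level, and infinitely many with shrinking margins converge to a proper disc.
-/

section LeviForm

variable {E : Type*} [NormedAddCommGroup E] [NormedSpace ℂ E]

/-- Twice the restriction to complex lines of a real bilinear form: for `H` the second derivative
of `ρ`, it is the Levi form of `ρ` up to a positive factor. -/
noncomputable def leviForm (H : E →L[ℝ] E →L[ℝ] ℝ) (v : E) : ℝ :=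
  H v v + H (Complex.I • v) (Complex.I • v)

/-- The Levi form of `ρ` at `z` has at least two positive eigenvalues, expressed through a complex
plane on which it is positive definite. -/
def HasTwoPositiveLeviEigenvalues (ρ : E → ℝ) (z : E) : Prop :=
  ∃ V : Submodule ℂ E, Module.finrank ℂ V = 2 ∧
    ∀ v ∈ V, v ≠ 0 → 0 < leviForm (fderiv ℝ (fderiv ℝ ρ) z) v

theorem complex_smul_eq_re_smul_add_im_smul (c : ℂ) (v : E) :
    c • v = c.re • v + c.im • (Complex.I • v) := by
  conv_lhs => rw [← Complex.re_add_im c]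
  rw [add_smul, mul_smul, Complex.coe_smul, Complex.coe_smul]

theorem I_smul_complex_smul (c : ℂ) (v : E) :
    Complex.I • c • v = c.re • (Complex.I • v) - c.im • v := by
  rw [smul_smul, complex_smul_eq_re_smul_add_im_smul]
  simp only [Complex.mul_re, Complex.I_re, zero_mul, Complex.I_im, one_mul, zero_sub, neg_smul,
    Complex.mul_im, zero_add]
  abel

theorem leviForm_smul (H : E →L[ℝ] E →L[ℝ] ℝ) (c : ℂ) (v : E) :
    leviForm H (c • v) = ‖c‖ ^ 2 * leviForm H v := by
  rw [← Complex.normSq_eq_norm_sq, Complex.normSq_apply, leviForm, I_smul_complex_smul,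
    complex_smul_eq_re_smul_add_im_smul]
  simp only [leviForm, map_add, map_sub, map_smul, add_apply, sub_apply, smul_apply, smul_eq_mul]
  ring

/-- The complex quadratic form whose real part is the non-hermitian part of `v ↦ H v v`. -/
noncomputable def nonHermitianPart (H : E →L[ℝ] E →L[ℝ] ℝ) : QuadraticForm ℂ E :=
  LinearMap.BilinMap.toQuadraticMap <| LinearMap.mk₂ ℂ
    (fun a b => ⟨(H a b - H (Complex.I • a) (Complex.I • b)) / 2,
      -(H a (Complex.I • b) + H (Complex.I • a) b) / 2⟩)
    (fun a a' b => by apply Complex.ext <;> simp <;> ring)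
    (fun c a b => by
      rw [I_smul_complex_smul, complex_smul_eq_re_smul_add_im_smul]
      apply Complex.ext <;> simp <;> ring)
    (fun a b b' => by apply Complex.ext <;> simp <;> ring)
    (fun c a b => by
      rw [I_smul_complex_smul, complex_smul_eq_re_smul_add_im_smul]
      apply Complex.ext <;> simp <;> ring)

theorem apply_self_eq_leviForm_add_re (H : E →L[ℝ] E →L[ℝ] ℝ) (v : E) :
    H v v = leviForm H v / 2 + (nonHermitianPart H v).re := by
  simp only [leviForm, nonHermitianPart, LinearMap.BilinMap.toQuadraticMap_apply,
    LinearMap.mk₂_apply]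
  ring

theorem exists_ne_zero_quadraticForm_eq_zero {K V : Type*} [Field K] [IsAlgClosed K]
    [AddCommGroup V] [Module K V] (Q : QuadraticForm K V) (hV : 1 < Module.finrank K V) :
    ∃ v, v ≠ 0 ∧ Q v = 0 := by
  have : Nontrivial V := Module.nontrivial_of_finrank_pos (R := K) (by lia)
  obtain ⟨a, ha⟩ := exists_ne (0 : V)
  obtain ⟨b, hab⟩ := exists_linearIndependent_pair_of_one_lt_finrank hV ha
  by_cases hQ : Q a = 0
  · exact ⟨a, ha, hQ⟩
  · open Polynomial in
    obtain ⟨y, hy⟩ := IsAlgClosed.exists_root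
      (C (Q a) * X ^ 2 + C (QuadraticMap.polar Q b a) * X + C (Q b) : K[X])
      (by rw [Polynomial.degree_quadratic hQ]; decide)
    refine ⟨b + y • a, fun h => ?_, ?_⟩
    · simpa using (LinearIndependent.pair_iff.1 hab y 1 (by rw [← h]; module)).2
    · rw [QuadraticMap.map_add Q, QuadraticMap.map_smul, QuadraticMap.polar_smul_right]
      simp only [Polynomial.IsRoot, Polynomial.eval_add, Polynomial.eval_mul, Polynomial.eval_C,
        Polynomial.eval_pow, Polynomial.eval_X] at hy
      simp only [smul_eq_mul]
      linear_combination hy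

theorem exists_ne_zero_mem_ker_and_quadraticForm_mem_range {K V : Type*} [Field K] [IsAlgClosed K]
    [AddCommGroup V] [Module K V] (W : Submodule K V) (hW : 1 < Module.finrank K W)
    (l : V →ₗ[K] K) (Q : QuadraticForm K V) :
    ∃ v ∈ W, v ≠ 0 ∧ l v = 0 ∧ ∃ q, l q = Q v := by
  by_cases hl : l = 0
  · obtain ⟨v, hv, hQ⟩ := exists_ne_zero_quadraticForm_eq_zero (Q.comp W.subtype) hW
    exact ⟨v, v.2, by simpa using hv, by simp [hl], 0, by simpa using hQ.symm⟩
  · have : Module.Finite K W := Module.finite_of_finrank_pos (by lia)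
    obtain ⟨v, hv, hv0⟩ := Submodule.exists_mem_ne_zero_of_ne_bot
      (LinearMap.ker_ne_bot_of_finrank_lt (f := l.comp W.subtype) (by simpa using hW))
    exact ⟨v, v.2, by simpa using hv0, by simpa using hv, LinearMap.surjective hl _⟩

/-- The vector `q` compensates the non-hermitian part of `H` in the direction `v`, so that only
the Levi form of `v` survives to second order along `η ↦ η • v + η ^ 2 • q`. -/
theorem exists_hermitian_direction (D : StrongDual ℝ E) (H : E →L[ℝ] E →L[ℝ] ℝ)
    (V : Submodule ℂ E) (hV : Module.finrank ℂ V = 2)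
    (hpos : ∀ w ∈ V, w ≠ 0 → 0 < leviForm H w) :
    ∃ (v q : E) (c : ℝ), 0 < c ∧ (∀ η : ℂ, D (η • v) = 0) ∧
      ∀ η : ℂ, D (η ^ 2 • q) + 1 / 2 * H (η • v) (η • v) = c * ‖η‖ ^ 2 := by
  set l : StrongDual ℂ E := D.extendRCLike
  have hD (w : E) : D w = (l w).re := (StrongDual.re_extendRCLike_apply (𝕜 := ℂ) D w).symm
  set Q := nonHermitianPart H
  obtain ⟨v, hvV, hv0, hlv, q, hq⟩ := exists_ne_zero_mem_ker_and_quadraticForm_mem_range V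
    (by lia) l Q
  refine ⟨v, (-1 / 2 : ℂ) • q, leviForm H v / 4, div_pos (hpos v hvV hv0) four_pos,
    fun η => by simp [hD, show l v = 0 from hlv], fun η => ?_⟩
  have hlq : l (η ^ 2 • (-1 / 2 : ℂ) • q) = (-1 / 2 : ℝ) * Q (η • v) := by
    rw [map_smul, map_smul, QuadraticMap.map_smul, show l q = Q v from hq]
    simp only [smul_eq_mul, Complex.ofReal_div, Complex.ofReal_neg, Complex.ofReal_one,
      Complex.ofReal_ofNat]
    ring
  rw [hD, hlq, Complex.re_ofReal_mul, apply_self_eq_leviForm_add_re, leviForm_smul]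
  ring

end LeviForm

section SecondOrder

open scoped Topology

variable {E F : Type*} [NormedAddCommGroup E] [NormedSpace ℝ E] [NormedAddCommGroup F]
  [NormedSpace ℝ F]

theorem hasFDerivAt_half_smul_apply_self {B : E →L[ℝ] E →L[ℝ] F} (hB : ∀ x y, B x y = B y x)
    (x : E) : HasFDerivAt (fun u => (1 / 2 : ℝ) • B u u) (B x) x := by
  refine ((B.hasFDerivAt.clm_apply (hasFDerivAt_id x)).const_smul (1 / 2 : ℝ)).congr_fderiv ?_
  ext w
  simp [hB w x, ← two_smul ℝ, smul_smul]

theorem isLittleO_taylor_two {f : E → F} {x₀ : E} (hf : ContDiffAt ℝ 2 f x₀) :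
    (fun p : E × E => f p.2 - f p.1 - fderiv ℝ f p.1 (p.2 - p.1)
      - (1 / 2 : ℝ) • fderiv ℝ (fderiv ℝ f) x₀ (p.2 - p.1) (p.2 - p.1)) =o[𝓝 (x₀, x₀)]
      fun p => ‖p.2 - p.1‖ ^ 2 := by
  set H := fderiv ℝ (fderiv ℝ f) x₀
  have hsymm : IsSymmSndFDerivAt ℝ f x₀ := hf.isSymmSndFDerivAt (by simp)
  have hderiv : HasStrictFDerivAt (fderiv ℝ f) H x₀ :=
    (hf.fderiv_right (m := 1) (by norm_num)).hasStrictFDerivAt one_ne_zero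
  have hdiff : ∀ᶠ x in 𝓝 x₀, DifferentiableAt ℝ f x :=
    (hf.eventually (by simp)).mono fun x hx => hx.differentiableAt two_ne_zero
  refine Asymptotics.isLittleO_iff.2 fun ε hε => ?_
  have hloc := (hderiv.isLittleO.def hε).and
    (continuous_fst.tendsto (x₀, x₀) |>.eventually hdiff)
  obtain ⟨r, hr, hball⟩ := Metric.eventually_nhds_iff_ball.1 hloc
  refine Metric.eventually_nhds_iff_ball.2 ⟨r, hr, fun p hp => ?_⟩
  obtain ⟨x, y⟩ := p
  rw [← ball_prod_same] at hp hball
  set s := ball x₀ r ∩ closedBall x ‖y - x‖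
  have hs : Convex ℝ s := (convex_ball _ _).inter (convex_closedBall _ _)
  have hmean := hs.norm_image_sub_le_of_norm_hasFDerivWithin_le (C := ε * ‖y - x‖)
    (f := fun u => f u - fderiv ℝ f x (u - x) - (1 / 2 : ℝ) • H (u - x) (u - x))
    (f' := fun u => fderiv ℝ f u - fderiv ℝ f x - H (u - x))
    (fun u hu => ?_) (fun u hu => ?_)
    (⟨hp.1, by simp⟩ : x ∈ s) (⟨hp.2, by simp [dist_eq_norm]⟩ : y ∈ s)
  · simp only [sub_self, map_zero, smul_zero, sub_zero] at hmean
    rw [norm_pow, norm_norm, pow_two, ← mul_assoc]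
    convert hmean using 2
    abel
  · have hsub : HasFDerivAt (fun u : E => u - x) (ContinuousLinearMap.id ℝ E) u :=
      (hasFDerivAt_id u).sub_const x
    exact (((hball (u, u) ⟨hu.1, hu.1⟩).2.hasFDerivAt.sub
      ((fderiv ℝ f x).hasFDerivAt.comp u hsub)).sub
      ((hasFDerivAt_half_smul_apply_self hsymm (u - x)).comp u hsub)).hasFDerivWithinAt
  · refine (hball (u, x) ⟨hu.1, hp.1⟩).1.trans ?_
    gcongr
    simpa [dist_eq_norm] using hu.2

theorem norm_apply_self_sub_apply_self_le (B : E →L[ℝ] E →L[ℝ] F) (x y : E) :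
    ‖B x x - B y y‖ ≤ ‖B‖ * ‖x - y‖ * (‖x‖ + ‖y‖) := by
  calc ‖B x x - B y y‖ = ‖B (x - y) x + B y (x - y)‖ := by
        congr 1
        simp
    _ ≤ ‖B‖ * ‖x - y‖ * ‖x‖ + ‖B‖ * ‖y‖ * ‖x - y‖ :=
      norm_add_le_of_le (B.le_opNorm₂ _ _) (B.le_opNorm₂ _ _)
    _ = ‖B‖ * ‖x - y‖ * (‖x‖ + ‖y‖) := by ring

end SecondOrder

section PushCurve

open scoped Topology

variable {E : Type*} [NormedAddCommGroup E] [NormedSpace ℂ E] {X : Set E} {ρ : E → ℝ} {z₀ : E}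

/-- An entire curve `w` through `0` such that moving along `w` from any point `z ∈ X` near `z₀`
raises `ρ` (up to the cap `L`) by `κ * ‖η‖ ^ 2`, except for a small real-linear term in `η`
that is itself dominated on the unit circle. -/
structure IsPushCurve (X : Set E) (ρ : E → ℝ) (L R κ : ℝ) (z₀ : E) (w : ℂ → E) : Prop where
  differentiable : Differentiable ℂ w
  map_zero : w 0 = 0
  norm_sub_le : ∀ η η' : ℂ, ‖η‖ ≤ 1 → ‖η'‖ ≤ 1 → ‖w η - w η'‖ ≤ ‖η - η'‖
  add_mem : ∀ z ∈ X, ‖z - z₀‖ < R → ∀ η : ℂ, ‖η‖ ≤ 1 → z + w η ∈ X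
  growth : ∀ z ∈ X, ‖z - z₀‖ < R → ∃ a : ℂ, ‖a‖ ≤ 1 / 2 ∧ ∀ η : ℂ, ‖η‖ ≤ 1 →
    min (ρ z + (a * η).re + (κ + ‖a‖) * ‖η‖ ^ 2) L ≤ ρ (z + w η)

namespace IsPushCurve

variable {L R κ : ℝ} {w : ℂ → E}

theorem mono (h : IsPushCurve X ρ L R κ z₀ w) {R' κ' : ℝ} {z₁ : E} (hR : ‖z₁ - z₀‖ + R' ≤ R)
    (hκ : κ' ≤ κ) : IsPushCurve X ρ L R' κ' z₁ w := by
  have hnear (z : E) (hz : ‖z - z₁‖ < R') : ‖z - z₀‖ < R := by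
    linarith [norm_sub_le_norm_sub_add_norm_sub z z₁ z₀]
  refine ⟨h.differentiable, h.map_zero, h.norm_sub_le, fun z hX hz => h.add_mem z hX (hnear z hz),
    fun z hX hz => ?_⟩
  obtain ⟨a, ha, hgrow⟩ := h.growth z hX (hnear z hz)
  exact ⟨a, ha, fun η hη => le_trans (by gcongr) (hgrow η hη)⟩

theorem norm_le (h : IsPushCurve X ρ L R κ z₀ w) {η : ℂ} (hη : ‖η‖ ≤ 1) : ‖w η‖ ≤ ‖η‖ := by
  simpa [h.map_zero] using h.norm_sub_le η 0 hη (by simp)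

theorem min_le_of_norm_eq_one (h : IsPushCurve X ρ L R κ z₀ w) {z : E} (hX : z ∈ X)
    (hz : ‖z - z₀‖ < R) {η : ℂ} (hη : ‖η‖ = 1) : min (ρ z + κ) L ≤ ρ (z + w η) := by
  obtain ⟨a, -, hgrow⟩ := h.growth z hX hz
  refine le_trans ?_ (hgrow η hη.le)
  have hlinear : -‖a‖ ≤ (a * η).re := by
    simpa [hη] using (abs_le.1 (Complex.abs_re_le_norm (a * η))).1
  rw [hη]
  exact min_le_min_right _ (by linarith)

theorem min_sub_half_le (h : IsPushCurve X ρ L R κ z₀ w) (hκ : 0 ≤ κ) {z : E} (hX : z ∈ X)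
    (hz : ‖z - z₀‖ < R) {η : ℂ} (hη : ‖η‖ ≤ 1) : min (ρ z - 1 / 2) L ≤ ρ (z + w η) := by
  obtain ⟨a, ha, hgrow⟩ := h.growth z hX hz
  refine le_trans ?_ (hgrow η hη)
  have hlinear : -(‖a‖ * ‖η‖) ≤ (a * η).re := by
    simpa using (abs_le.1 (Complex.abs_re_le_norm (a * η))).1
  have hhalf : ‖a‖ * ‖η‖ ≤ 1 / 2 * 1 := by gcongr
  have hsq : 0 ≤ (κ + ‖a‖) * ‖η‖ ^ 2 := by positivity
  gcongr
  linarith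

end IsPushCurve

theorem exists_norm_eq_one_and_re_mul_nonneg (a a' : ℂ) :
    ∃ b : ℂ, ‖b‖ = 1 ∧ 0 ≤ (a * b).re ∧ 0 ≤ (a' * b).re := by
  set b := Complex.I * Complex.exp ((-a.arg : ℝ) * Complex.I) with hb
  have hb1 : ‖b‖ = 1 := by rw [hb, norm_mul, Complex.norm_exp_ofReal_mul_I]; simp
  have hab : (a * b).re = 0 := by
    have : a * b = ‖a‖ * Complex.I := by
      conv_lhs => rw [← Complex.norm_mul_exp_arg_mul_I a]
      rw [hb, mul_assoc, mul_left_comm (Complex.exp _), ← Complex.exp_add]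
      simp
    simp [this]
  rcases le_total 0 (a' * b).re with h | h
  · exact ⟨b, hb1, hab.ge, h⟩
  · exact ⟨-b, by simpa using hb1, by simp only [mul_neg, Complex.neg_re, hab, neg_zero, le_refl],
      by simpa using h⟩

/-- One rotation `b` makes the linear terms at two points `z` and `z'` nonnegative along the radii
through `b * u` and `b * u'`. -/
theorem IsPushCurve.exists_rotation {L R κ : ℝ} {w : ℂ → E} (h : IsPushCurve X ρ L R κ z₀ w)
    {z z' : E} (hX : z ∈ X) (hz : ‖z - z₀‖ < R) (hX' : z' ∈ X) (hz' : ‖z' - z₀‖ < R) {u u' : ℂ}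
    (hu : ‖u‖ = 1) (hu' : ‖u'‖ = 1) :
    ∃ b : ℂ, ‖b‖ = 1 ∧ ∀ s : ℝ, 0 ≤ s → s ≤ 1 →
      min (ρ z + κ * s ^ 2) L ≤ ρ (z + w (b * (u * s))) ∧
      min (ρ z' + κ * s ^ 2) L ≤ ρ (z' + w (b * (u' * s))) := by
  obtain ⟨a, -, hgrow⟩ := h.growth z hX hz
  obtain ⟨a', -, hgrow'⟩ := h.growth z' hX' hz'
  obtain ⟨b, hb, hre, hre'⟩ := exists_norm_eq_one_and_re_mul_nonneg (a * u) (a' * u')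
  have hradius {y : E} {c v : ℂ} (hv : ‖v‖ = 1) (hc : 0 ≤ (c * v * b).re)
      (hg : ∀ η : ℂ, ‖η‖ ≤ 1 → min (ρ y + (c * η).re + (κ + ‖c‖) * ‖η‖ ^ 2) L ≤ ρ (y + w η))
      {s : ℝ} (hs0 : 0 ≤ s) (hs1 : s ≤ 1) : min (ρ y + κ * s ^ 2) L ≤ ρ (y + w (b * (v * s))) := by
    have hn : ‖b * (v * s)‖ = s := by simp [hb, hv, abs_of_nonneg hs0]
    refine le_trans ?_ (hg _ (hn.trans_le hs1))
    have hlinear : 0 ≤ (c * (b * (v * s))).re := by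
      rw [show c * (b * (v * s)) = (c * v * b) * s by ring, Complex.re_mul_ofReal]
      positivity
    rw [hn]
    gcongr
    · linarith
    · linarith [norm_nonneg c]
  exact ⟨b, hb, fun s hs0 hs1 => ⟨hradius hu hre hgrow hs0 hs1, hradius hu' hre' hgrow' hs0 hs1⟩⟩

/-- The curve `η ↦ t * η • v + t ^ 2 * η ^ 2 • q` along which `ρ` is raised. -/
noncomputable def quadraticCurve (v q : E) (t : ℝ) (η : ℂ) : E :=
  t • (η • v) + t ^ 2 • (η ^ 2 • q)

section QuadraticCurve

variable {v q : E} {t A : ℝ}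

theorem norm_quadraticCurve_sub_le (hA : ‖v‖ + 2 * ‖q‖ ≤ A) (ht0 : 0 ≤ t) (ht1 : t ≤ 1) {η η' : ℂ}
    (hη : ‖η‖ ≤ 1) (hη' : ‖η'‖ ≤ 1) :
    ‖quadraticCurve v q t η - quadraticCurve v q t η'‖ ≤ t * A * ‖η - η'‖ := by
  have hfactor : quadraticCurve v q t η - quadraticCurve v q t η' =
      t • ((η - η') • v) + t ^ 2 • (((η + η') * (η - η')) • q) := by
    simp only [quadraticCurve]
    rw [show (η + η') * (η - η') = η ^ 2 - η' ^ 2 by ring, sub_smul, sub_smul, smul_sub, smul_sub]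
    abel
  have hsum : ‖η + η'‖ ≤ 2 := (norm_add_le _ _).trans (by linarith)
  rw [hfactor]
  refine (norm_add_le _ _).trans ?_
  simp only [norm_smul, norm_mul, norm_pow, Real.norm_eq_abs, abs_of_nonneg ht0]
  calc t * (‖η - η'‖ * ‖v‖) + t ^ 2 * (‖η + η'‖ * ‖η - η'‖ * ‖q‖)
      ≤ t * (‖η - η'‖ * ‖v‖) + (t * 1) * (2 * ‖η - η'‖ * ‖q‖) := by rw [pow_two]; gcongr
    _ = t * ‖η - η'‖ * (‖v‖ + 2 * ‖q‖) := by ring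
    _ ≤ t * ‖η - η'‖ * A := by gcongr
    _ = t * A * ‖η - η'‖ := by ring

theorem norm_quadraticCurve_le (hA : ‖v‖ + 2 * ‖q‖ ≤ A) (ht0 : 0 ≤ t) (ht1 : t ≤ 1) {η : ℂ}
    (hη : ‖η‖ ≤ 1) : ‖quadraticCurve v q t η‖ ≤ t * A * ‖η‖ := by
  simpa [quadraticCurve] using norm_quadraticCurve_sub_le hA ht0 ht1 hη (η' := 0) (by simp)

theorem add_quadraticCurve_mem_ball (hA : ‖v‖ + 2 * ‖q‖ ≤ A) (ht0 : 0 ≤ t) (ht1 : t ≤ 1) {r : ℝ}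
    (htr : t * A ≤ r / 2) {z : E} (hz : z ∈ ball z₀ (r / 2)) {η : ℂ} (hη : ‖η‖ ≤ 1) :
    z + quadraticCurve v q t η ∈ ball z₀ r := by
  have hA0 : 0 ≤ A := le_trans (by positivity) hA
  have hw : ‖quadraticCurve v q t η‖ ≤ r / 2 := (norm_quadraticCurve_le hA ht0 ht1 hη).trans <|
    (mul_le_of_le_one_right (by positivity) hη).trans htr
  rw [mem_ball_iff_norm] at hz ⊢
  rw [add_sub_right_comm]
  exact (norm_add_le _ _).trans_lt (by linarith)

theorem le_second_order_quadraticCurve (hA : ‖v‖ + 2 * ‖q‖ ≤ A) (ht0 : 0 ≤ t) (ht1 : t ≤ 1)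
    (D D₀ : StrongDual ℝ E) (H : E →L[ℝ] E →L[ℝ] ℝ) {c : ℝ} {η : ℂ} (hη : ‖η‖ ≤ 1)
    (hq : D₀ (η ^ 2 • q) + 1 / 2 * H (η • v) (η • v) = c * ‖η‖ ^ 2) :
    t * D (η • v) + t ^ 2 * ‖η‖ ^ 2 * (c - ‖D - D₀‖ * A - t * (‖H‖ * A ^ 2)) ≤
      D (quadraticCurve v q t η)
        + 1 / 2 * H (quadraticCurve v q t η) (quadraticCurve v q t η) := by
  set x := η • v with hx
  set y := η ^ 2 • q with hy
  set w := quadraticCurve v q t η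
  have hwx : w = t • x + t ^ 2 • y := rfl
  have hA0 : 0 ≤ A := le_trans (by positivity) hA
  have hvA : ‖v‖ ≤ A := by linarith [norm_nonneg q]
  have hqA : ‖q‖ ≤ A := by linarith [norm_nonneg v, norm_nonneg q]
  have hyn : ‖y‖ ≤ ‖η‖ ^ 2 * A := by rw [hy, norm_smul, norm_pow]; gcongr
  have hDy : D₀ y - ‖D - D₀‖ * A * ‖η‖ ^ 2 ≤ D y := by
    have hle : |D y - D₀ y| ≤ ‖D - D₀‖ * (‖η‖ ^ 2 * A) :=
      ((D - D₀).le_opNorm y).trans (by gcongr)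
    linarith [(abs_le.1 hle).1]
  have hHw : 1 / 2 * H (t • x) (t • x) - t ^ 3 * (‖H‖ * A ^ 2) * ‖η‖ ^ 2 ≤ 1 / 2 * H w w := by
    have htx : ‖t • x‖ ≤ t * A := by
      rw [norm_smul, hx, norm_smul, Real.norm_of_nonneg ht0]
      gcongr
      simpa using mul_le_mul hη hvA (norm_nonneg _) zero_le_one
    have hwn : ‖w‖ ≤ t * A := (norm_quadraticCurve_le hA ht0 ht1 hη).trans
      (mul_le_of_le_one_right (by positivity) hη)
    have hwy : ‖w - t • x‖ ≤ t ^ 2 * (‖η‖ ^ 2 * A) := by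
      rw [hwx, add_sub_cancel_left, norm_smul, Real.norm_of_nonneg (by positivity)]
      gcongr
    have hle : |H w w - H (t • x) (t • x)| ≤
        ‖H‖ * (t ^ 2 * (‖η‖ ^ 2 * A)) * (t * A + t * A) :=
      (norm_apply_self_sub_apply_self_le H w (t • x)).trans (by gcongr)
    linarith [(abs_le.1 hle).1]
  have hHx : H (t • x) (t • x) = t ^ 2 * H x x := by simp; ring
  have hDw : D w = t * D x + t ^ 2 * D y := by simp [hwx]
  rw [hHx] at hHw
  rw [hDw]
  linear_combination hHw + t ^ 2 * hDy - t ^ 2 * hq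

end QuadraticCurve

theorem eventually_nhdsGT_mul_le (a : ℝ) {b : ℝ} (hb : 0 < b) :
    ∀ᶠ t : ℝ in 𝓝[>] 0, t * a ≤ b :=
  nhdsWithin_le_nhds <| (ContinuousAt.eventually_lt (by fun_prop) continuousAt_const
    (by simpa using hb)).mono fun _ => le_of_lt

/-- The linear term of `IsPushCurve.growth` is produced by the defect `D - D₀` of the
differentials of `ρ` at `z` and `z₀`. -/
theorem le_add_quadraticCurve {v q z : E} {t A c ε : ℝ} (hA : ‖v‖ + 2 * ‖q‖ ≤ A) (ht0 : 0 ≤ t)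
    (ht1 : t ≤ 1) (hc : 0 ≤ c) (D₀ : StrongDual ℝ E) (H : E →L[ℝ] E →L[ℝ] ℝ)
    (hv : ∀ η : ℂ, D₀ (η • v) = 0)
    (hq : ∀ η : ℂ, D₀ (η ^ 2 • q) + 1 / 2 * H (η • v) (η • v) = c * ‖η‖ ^ 2)
    (hD : ‖fderiv ℝ ρ z - D₀‖ * A ≤ t * c / 4) (hH : t * (‖H‖ * A ^ 2) ≤ c / 8)
    (hε0 : 0 ≤ ε) (hε : ε * A ^ 2 ≤ c / 8)
    (htaylor : ∀ η : ℂ, ‖η‖ ≤ 1 →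
      |ρ (z + quadraticCurve v q t η) - ρ z - fderiv ℝ ρ z (quadraticCurve v q t η)
        - 1 / 2 * H (quadraticCurve v q t η) (quadraticCurve v q t η)| ≤
        ε * ‖quadraticCurve v q t η‖ ^ 2) :
    ∃ a : ℂ, ‖a‖ ≤ t ^ 2 * c / 4 ∧ ∀ η : ℂ, ‖η‖ ≤ 1 →
      ρ z + (a * η).re + (t ^ 2 * c / 4 + ‖a‖) * ‖η‖ ^ 2 ≤ ρ (z + quadraticCurve v q t η) := by
  set D := fderiv ℝ ρ z
  set l : StrongDual ℂ E := StrongDual.extendRCLike (D - D₀)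
  have ha : ‖t * l v‖ ≤ t ^ 2 * c / 4 := by
    have hl : ‖l v‖ ≤ t * c / 4 := (StrongDual.norm_extendRCLike_bound (D - D₀) v).trans <|
      le_trans (by gcongr; linarith [norm_nonneg q]) hD
    calc ‖t * l v‖ = t * ‖l v‖ := by simp [abs_of_nonneg ht0]
      _ ≤ t * (t * c / 4) := by gcongr
      _ = t ^ 2 * c / 4 := by ring
  refine ⟨t * l v, ha, fun η hη => ?_⟩
  have hlin : (t * l v * η).re = t * D (η • v) := by
    have hre : (l (η • v)).re = D (η • v) - D₀ (η • v) :=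
      StrongDual.re_extendRCLike_apply (𝕜 := ℂ) (D - D₀) (η • v)
    rw [mul_assoc, Complex.re_ofReal_mul, mul_comm (l v), ← smul_eq_mul η, ← map_smul, hre, hv,
      sub_zero]
  have hsecond := le_second_order_quadraticCurve hA ht0 ht1 D D₀ H hη (hq η)
  have hw : ε * ‖quadraticCurve v q t η‖ ^ 2 ≤ t ^ 2 * ‖η‖ ^ 2 * (c / 8) := by
    calc ε * ‖quadraticCurve v q t η‖ ^ 2 ≤ ε * (t * A * ‖η‖) ^ 2 := by
          gcongr
          exact norm_quadraticCurve_le hA ht0 ht1 hη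
      _ = t ^ 2 * ‖η‖ ^ 2 * (ε * A ^ 2) := by ring
      _ ≤ t ^ 2 * ‖η‖ ^ 2 * (c / 8) := by gcongr
  have hmain : (t ^ 2 * c / 4 + ‖t * l v‖) * ‖η‖ ^ 2 ≤
      t ^ 2 * ‖η‖ ^ 2 * (c - ‖D - D₀‖ * A - t * (‖H‖ * A ^ 2) - c / 8) := by
    calc (t ^ 2 * c / 4 + ‖t * l v‖) * ‖η‖ ^ 2
        ≤ (t ^ 2 * c / 4 + t ^ 2 * c / 4) * ‖η‖ ^ 2 := by gcongr
      _ = t ^ 2 * ‖η‖ ^ 2 * (c - c / 4 - c / 8 - c / 8) := by ring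
      _ ≤ t ^ 2 * ‖η‖ ^ 2 * (c - ‖D - D₀‖ * A - t * (‖H‖ * A ^ 2) - c / 8) := by
        gcongr
        exact hD.trans (by linarith [mul_le_of_le_one_left hc ht1])
  rw [hlin]
  linarith [(abs_le.1 (htaylor η hη)).1]

theorem exists_isPushCurve (hX : IsOpen X) (hz₀ : z₀ ∈ X) (hρ : ContDiffAt ℝ 2 ρ z₀)
    (hLevi : HasTwoPositiveLeviEigenvalues ρ z₀) :
    ∃ R > 0, ∃ κ > 0, ∃ w, ∀ L, IsPushCurve X ρ L R κ z₀ w := by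
  obtain ⟨V, hV, hpos⟩ := hLevi
  set H := fderiv ℝ (fderiv ℝ ρ) z₀
  obtain ⟨v, q, c, hc, hv, hq⟩ := exists_hermitian_direction (fderiv ℝ ρ z₀) H V hV hpos
  set A := ‖v‖ + 2 * ‖q‖ + 1
  have hA : ‖v‖ + 2 * ‖q‖ ≤ A := by simp [A]
  have : 0 < A := by positivity
  have hε : 0 < c / 8 / A ^ 2 := by positivity
  obtain ⟨r, hr, htaylor⟩ := Metric.eventually_nhds_iff_ball.1 <|
    ((isLittleO_taylor_two hρ).def hε).and
      (continuous_snd.tendsto (z₀, z₀) |>.eventually (hX.mem_nhds hz₀))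
  rw [← ball_prod_same] at htaylor
  obtain ⟨t, ht0, ht1, htA, htr, htH, htc⟩ : ∃ t : ℝ, 0 < t ∧ t * 1 ≤ 1 ∧ t * A ≤ 1 ∧
      t * A ≤ r / 2 ∧ t * (‖H‖ * A ^ 2) ≤ c / 8 ∧ t * c ≤ 2 :=
    (eventually_mem_nhdsWithin.and <| (eventually_nhdsGT_mul_le _ one_pos).and <|
      (eventually_nhdsGT_mul_le _ one_pos).and <| (eventually_nhdsGT_mul_le _ (half_pos hr)).and <|
      (eventually_nhdsGT_mul_le _ (by positivity)).and <|
      eventually_nhdsGT_mul_le _ two_pos).exists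
  rw [mul_one] at ht1
  have hD : ∀ᶠ z in 𝓝 z₀, ‖fderiv ℝ ρ z - fderiv ℝ ρ z₀‖ * A < t * c / 4 := by
    have : ContinuousAt (fderiv ℝ ρ) z₀ :=
      (hρ.fderiv_right (m := 1) (by norm_num)).continuousAt
    refine ContinuousAt.eventually_lt (by fun_prop) continuousAt_const ?_
    rw [sub_self, norm_zero, zero_mul]
    positivity
  obtain ⟨R, hR, hDR⟩ := Metric.eventually_nhds_iff_ball.1 hD
  set w := quadraticCurve v q t
  have hball (z : E) (hz : ‖z - z₀‖ < min R (r / 2)) (η : ℂ) (hη : ‖η‖ ≤ 1) :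
      (z, z + w η) ∈ ball z₀ r ×ˢ ball z₀ r := by
    have hzr : z ∈ ball z₀ (r / 2) := mem_ball_iff_norm.2 (hz.trans_le (min_le_right _ _))
    exact ⟨ball_subset_ball (by linarith) hzr,
      add_quadraticCurve_mem_ball hA ht0.le ht1 htr hzr hη⟩
  refine ⟨min R (r / 2), by positivity, t ^ 2 * c / 4, by positivity, w, fun L =>
    ⟨by unfold w quadraticCurve; fun_prop, by simp [w, quadraticCurve], fun η η' hη hη' =>
      (norm_quadraticCurve_sub_le hA ht0.le ht1 hη hη').trans
        (mul_le_of_le_one_left (norm_nonneg _) htA),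
      fun z _ hz η hη => (htaylor _ (hball z hz η hη)).2, fun z _ hz => ?_⟩⟩
  obtain ⟨a, ha, hgrow⟩ := le_add_quadraticCurve hA ht0.le ht1 hc.le _ H hv hq
    (hDR z (mem_ball_iff_norm.2 (hz.trans_le (min_le_left _ _)))).le htH hε.le
    (div_mul_cancel₀ _ (by positivity)).le
    (fun η hη => by simpa using (htaylor _ (hball z hz η hη)).1)
  exact ⟨a, ha.trans (by nlinarith), fun η hη => (min_le_left _ _).trans (hgrow η hη)⟩

end PushCurve

section UniformPushCurve

open scoped Topology

theorem exists_pos_forall_dist_lt_of_isCompact {α : Type*} [PseudoMetricSpace α] {K : Set α}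
    (hK : IsCompact K) {P : α → α → Prop} (hP : ∀ x ∈ K, ∀ᶠ p in 𝓝 (x, x), P p.1 p.2) :
    ∃ ε > 0, ∀ x ∈ K, ∀ y, dist y x < ε → P x y := by
  refine hK.induction_on (p := fun s => ∃ ε > 0, ∀ x ∈ s, ∀ y, dist y x < ε → P x y)
    ⟨1, one_pos, by simp⟩ ?_ ?_ fun x hx => ?_
  · rintro s t hst ⟨ε, hε, h⟩
    exact ⟨ε, hε, fun x hx => h x (hst hx)⟩
  · rintro s t ⟨ε, hε, h⟩ ⟨ε', hε', h'⟩
    refine ⟨min ε ε', lt_min hε hε', ?_⟩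
    rintro x (hx | hx) y hy
    · exact h x hx y (hy.trans_le (min_le_left _ _))
    · exact h' x hx y (hy.trans_le (min_le_right _ _))
  · obtain ⟨r, hr, h⟩ := Metric.eventually_nhds_iff_ball.1 (hP x hx)
    rw [← ball_prod_same] at h
    refine ⟨ball x (r / 2), mem_nhdsWithin_of_mem_nhds (ball_mem_nhds _ (half_pos hr)),
      r / 2, half_pos hr, fun u hu y hy => ?_⟩
    rw [mem_ball] at hu
    exact h (u, y) ⟨mem_ball.2 (by linarith),
      mem_ball.2 (by linarith [dist_triangle y u x])⟩

theorem exists_pos_forall_dist_lt_mem_and_dist_lt {α β : Type*} [PseudoMetricSpace α]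
    [PseudoMetricSpace β] {X K : Set α} (hX : IsOpen X) (hK : IsCompact K) (hKX : K ⊆ X)
    {f : α → β} (hf : ContinuousOn f X) {τ : ℝ} (hτ : 0 < τ) :
    ∃ ε > 0, ∀ x ∈ K, ∀ y, dist y x < ε → y ∈ X ∧ dist (f y) (f x) < τ := by
  refine exists_pos_forall_dist_lt_of_isCompact hK fun x hx => ?_
  have hXx := hX.mem_nhds (hKX hx)
  have hfx := hf.continuousAt hXx
  refine (continuous_snd.tendsto (x, x) |>.eventually hXx).and ?_
  have hdist := (hfx.tendsto.comp (continuous_snd.tendsto (x, x))).dist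
    (hfx.tendsto.comp (continuous_fst.tendsto (x, x)))
  exact hdist.eventually_lt_const (by simpa using hτ)

variable {E : Type*} [NormedAddCommGroup E] [NormedSpace ℂ E] {X : Set E} {ρ : E → ℝ}

theorem isPushCurve_zero {L R κ : ℝ} {z₀ : E} (h : ∀ z ∈ X, ‖z - z₀‖ < R → L ≤ ρ z) :
    IsPushCurve X ρ L R κ z₀ (fun _ => 0) := by
  refine ⟨by fun_prop, rfl, by simp, fun z hz _ η _ => by simpa using hz, fun z hz hz₀ => ?_⟩
  exact ⟨0, by simp, fun η _ => by simpa using Or.inr (h z hz hz₀)⟩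

theorem exists_isPushCurve_of_isCompact (hX : IsOpen X) (hρ : ContDiffOn ℝ 2 ρ X) {K : Set E}
    (hK : IsCompact K) (hKX : K ⊆ X)
    (hLevi : ∀ z ∈ K, HasTwoPositiveLeviEigenvalues ρ z) (L : ℝ) :
    ∃ R > 0, ∃ κ > 0, ∀ z₀ ∈ K, ∃ w, IsPushCurve X ρ L R κ z₀ w := by
  refine hK.induction_on (p := fun s => ∃ R > 0, ∃ κ > 0, ∀ z₀ ∈ s, ∃ w,
    IsPushCurve X ρ L R κ z₀ w) ⟨1, one_pos, 1, one_pos, by simp⟩ ?_ ?_ fun z hz => ?_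
  · rintro s t hst ⟨R, hR, κ, hκ, h⟩
    exact ⟨R, hR, κ, hκ, fun z hz => h z (hst hz)⟩
  · rintro s t ⟨R, hR, κ, hκ, h⟩ ⟨R', hR', κ', hκ', h'⟩
    refine ⟨min R R', lt_min hR hR', min κ κ', lt_min hκ hκ', ?_⟩
    rintro z (hz | hz)
    · obtain ⟨w, hw⟩ := h z hz
      exact ⟨w, hw.mono (by simp) (min_le_left _ _)⟩
    · obtain ⟨w, hw⟩ := h' z hz
      exact ⟨w, hw.mono (by simp) (min_le_right _ _)⟩
  · obtain ⟨R, hR, κ, hκ, w, hw⟩ := exists_isPushCurve hX (hKX hz)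
      (hρ.contDiffAt (hX.mem_nhds (hKX hz))) (hLevi z hz)
    refine ⟨ball z (R / 2), mem_nhdsWithin_of_mem_nhds (ball_mem_nhds _ (half_pos hR)),
      R / 2, half_pos hR, κ, hκ, fun z' hz' => ⟨w, (hw L).mono ?_ le_rfl⟩⟩
    rw [mem_ball_iff_norm] at hz'
    linarith

theorem exists_isPushCurve_of_exhaustion (hX : IsOpen X) (hρ : ContDiffOn ℝ 2 ρ X)
    (hexh : ∀ c : ℝ, IsCompact {z ∈ X | ρ z ≤ c}) {M : ℝ}
    (hLevi : ∀ z ∈ X, M < ρ z → HasTwoPositiveLeviEigenvalues ρ z) {m : ℝ} (hm : M < m) (L : ℝ) :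
    ∃ R > 0, ∃ κ > 0, ∀ z₀ ∈ X, m ≤ ρ z₀ → ∃ w, IsPushCurve X ρ L R κ z₀ w := by
  have hclosed : IsClosed ({z ∈ X | ρ z ≤ L + 1} ∩ ρ ⁻¹' Set.Ici m) :=
    (hρ.continuousOn.mono fun z hz => hz.1).preimage_isClosed_of_isClosed
      (hexh (L + 1)).isClosed isClosed_Ici
  have hcompact := (hexh (L + 1)).of_isClosed_subset hclosed Set.inter_subset_left
  obtain ⟨R₁, hR₁, κ, hκ, hcurve⟩ := exists_isPushCurve_of_isCompact hX hρ hcompact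
    (fun z hz => hz.1.1) (fun z hz => hLevi z hz.1.1 (hm.trans_le hz.2)) L
  obtain ⟨R₂, hR₂, hnear⟩ := exists_pos_forall_dist_lt_mem_and_dist_lt hX (hexh L)
    (fun z hz => hz.1) hρ.continuousOn one_pos
  refine ⟨min R₁ R₂, lt_min hR₁ hR₂, κ, hκ, fun z₀ hz₀ hmz => ?_⟩
  by_cases hL : ρ z₀ ≤ L + 1
  · obtain ⟨w, hw⟩ := hcurve z₀ ⟨⟨hz₀, hL⟩, hmz⟩
    exact ⟨w, hw.mono (by simp) le_rfl⟩
  · refine ⟨fun _ => 0, isPushCurve_zero fun z hz hzz => ?_⟩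
    by_contra! hlt
    have hdist := (hnear z ⟨hz, hlt.le⟩ z₀ (by
      rw [dist_comm, dist_eq_norm]
      exact hzz.trans_le (min_le_right _ _))).2
    rw [Real.dist_eq] at hdist
    linarith [(abs_lt.1 hdist).2]

end UniformPushCurve

section PushDisc

open scoped Topology

variable {E : Type*} [NormedAddCommGroup E] [NormedSpace ℂ E] {X : Set E} {f : ℂ → E}

/-- A disc in `X`: a continuous map from the closed unit disc to `X`, holomorphic inside. The
values of `f` off the closed unit disc are irrelevant. -/
structure IsDisc (X : Set E) (f : ℂ → E) : Prop where
  continuousOn : ContinuousOn f (closedBall 0 1)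
  differentiableOn : DifferentiableOn ℂ f (ball 0 1)
  mem : ∀ ζ : ℂ, ‖ζ‖ ≤ 1 → f ζ ∈ X

/-- A function of the disc algebra, bounded by one; it prescribes how far a disc is pushed. -/
structure IsMultiplier (k : ℂ → ℂ) : Prop where
  continuousOn : ContinuousOn k (closedBall 0 1)
  differentiableOn : DifferentiableOn ℂ k (ball 0 1)
  norm_le_one : ∀ ζ : ℂ, ‖ζ‖ ≤ 1 → ‖k ζ‖ ≤ 1

namespace IsMultiplier

variable {k : ℂ → ℂ}

theorem comp_mul (hk : IsMultiplier k) {a : ℂ} (ha : ‖a‖ = 1) :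
    IsMultiplier fun ζ => k (ζ * a) :=
  ⟨hk.continuousOn.comp (by fun_prop) fun ζ hζ => by simpa [ha] using hζ,
    hk.differentiableOn.comp (by fun_prop) fun ζ hζ => by simpa [ha] using hζ,
    fun ζ hζ => hk.norm_le_one _ (by simpa [ha] using hζ)⟩

theorem pow (hk : IsMultiplier k) (N : ℕ) : IsMultiplier fun ζ => k ζ ^ N :=
  ⟨hk.continuousOn.pow N, hk.differentiableOn.pow N, fun ζ hζ => by
    simpa using pow_le_one₀ (norm_nonneg _) (hk.norm_le_one ζ hζ)⟩

theorem const_mul (hk : IsMultiplier k) {b : ℂ} (hb : ‖b‖ = 1) :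
    IsMultiplier fun ζ => b * k ζ :=
  ⟨continuousOn_const.mul hk.continuousOn, hk.differentiableOn.const_mul b, fun ζ hζ => by
    simpa [hb] using hk.norm_le_one ζ hζ⟩

end IsMultiplier

/-- The disc `f` pushed along the curves `w j`, by the amounts `k j`. The factor `ζ ^ 2`
preserves the center of the disc and the derivative there. -/
def pushDisc {ι : Type*} [Fintype ι] (f : ℂ → E) (w : ι → ℂ → E) (k : ι → ℂ → ℂ) (ζ : ℂ) : E :=
  f ζ + ∑ j, w j (ζ ^ 2 * k j ζ)

variable {ι : Type*} {w : ι → ℂ → E} {k : ι → ℂ → ℂ} {ρ : E → ℝ} {L R κ : ℝ} {z : ι → E}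

theorem norm_sq_mul_le {ζ : ℂ} (hζ : ‖ζ‖ ≤ 1) (a : ℂ) : ‖ζ ^ 2 * a‖ ≤ ‖a‖ := by
  rw [norm_mul, norm_pow]
  exact mul_le_of_le_one_left (norm_nonneg a) (pow_le_one₀ (norm_nonneg ζ) hζ)

theorem norm_sq_mul_sub_sq_mul_le {ζ y a σ : ℂ} (hζ : ‖ζ‖ ≤ 1) (hy : ‖y‖ ≤ 1) (ha : ‖a‖ ≤ 1) :
    ‖ζ ^ 2 * a - y ^ 2 * σ‖ ≤ 2 * ‖ζ - y‖ + ‖a - σ‖ := by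
  have hsum : ‖ζ + y‖ ≤ 2 := (norm_add_le _ _).trans (by linarith)
  calc ‖ζ ^ 2 * a - y ^ 2 * σ‖ = ‖(ζ + y) * (ζ - y) * a + y ^ 2 * (a - σ)‖ := by ring_nf
    _ ≤ ‖ζ + y‖ * ‖ζ - y‖ * ‖a‖ + ‖y ^ 2 * (a - σ)‖ := by
      rw [← norm_mul, ← norm_mul]
      exact norm_add_le _ _
    _ ≤ 2 * ‖ζ - y‖ * 1 + ‖a - σ‖ := by
      gcongr
      exact norm_sq_mul_le hy _
    _ = 2 * ‖ζ - y‖ + ‖a - σ‖ := by rw [mul_one]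

theorem norm_curve_sq_mul_le (hw : ∀ j, IsPushCurve X ρ L R κ (z j) (w j))
    (hk : ∀ j, IsMultiplier (k j)) (j : ι) {ζ : ℂ} (hζ : ‖ζ‖ ≤ 1) :
    ‖w j (ζ ^ 2 * k j ζ)‖ ≤ ‖k j ζ‖ :=
  ((hw j).norm_le ((norm_sq_mul_le hζ _).trans ((hk j).norm_le_one ζ hζ))).trans
    (norm_sq_mul_le hζ _)

theorem isCompact_setOf_norm_sub_le (hf : IsDisc X f) (a : E) (b : ℝ) :
    IsCompact {y ∈ closedBall (0 : ℂ) 1 | ‖f y - a‖ ≤ b} :=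
  (isCompact_closedBall (0 : ℂ) 1).of_isClosed_subset
    ((hf.continuousOn.sub continuousOn_const).norm.preimage_isClosed_of_isClosed
      isClosed_closedBall isClosed_Iic) fun _ hy => hy.1

theorem exists_pos_forall_pushed_points [Finite ι] (hX : IsOpen X) (hρ : ContinuousOn ρ X)
    (hf : IsDisc X f) (hR : 0 < R) (hw : ∀ j, IsPushCurve X ρ L R κ (z j) (w j)) {δ : ℝ}
    (hδ : 0 < δ) : ∃ ε > 0, ∀ y : ℂ, ‖y‖ ≤ 1 →
      (∀ p, ‖p - f y‖ < ε → p ∈ X ∧ ρ (f y) - δ < ρ p) ∧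
      ∀ j, ‖f y - z j‖ ≤ 3 * R / 4 → ∀ η : ℂ, ‖η‖ ≤ 1 → ∀ p, ‖p - (f y + w j η)‖ < ε →
        p ∈ X ∧ ρ (f y + w j η) - δ < ρ p := by
  set U : ι → Set ℂ := fun j => {y ∈ closedBall (0 : ℂ) 1 | ‖f y - z j‖ ≤ 3 * R / 4}
  set K : Set E := f '' closedBall 0 1 ∪
    ⋃ j, (fun p : ℂ × ℂ => f p.1 + w j p.2) '' (U j ×ˢ closedBall (0 : ℂ) 1)
  have hK : IsCompact K := by
    refine ((isCompact_closedBall _ _).image_of_continuousOn hf.continuousOn).union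
      (isCompact_iUnion fun j => ((isCompact_setOf_norm_sub_le hf _ _).prod
        (isCompact_closedBall _ _)).image_of_continuousOn ?_)
    exact (hf.continuousOn.comp continuousOn_fst fun p hp => hp.1.1).add
      ((hw j).differentiable.continuous.comp_continuousOn continuousOn_snd)
  have hKX : K ⊆ X := by
    refine Set.union_subset ?_ (Set.iUnion_subset fun j => ?_)
    · rintro _ ⟨y, hy, rfl⟩
      exact hf.mem y (by simpa using hy)
    · rintro _ ⟨⟨y, η⟩, ⟨⟨hy, hyz⟩, hη⟩, rfl⟩
      exact (hw j).add_mem _ (hf.mem y (by simpa using hy)) (hyz.trans_lt (by linarith)) η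
        (by simpa using hη)
  obtain ⟨ε, hε, hnear⟩ := exists_pos_forall_dist_lt_mem_and_dist_lt hX hK hKX hρ hδ
  have key (x : E) (hx : x ∈ K) (p : E) (hp : ‖p - x‖ < ε) : p ∈ X ∧ ρ x - δ < ρ p := by
    obtain ⟨hpX, hdist⟩ := hnear x hx p (by rwa [dist_eq_norm])
    rw [Real.dist_eq] at hdist
    exact ⟨hpX, by linarith [(abs_lt.1 hdist).1]⟩
  refine ⟨ε, hε, fun y hy => ⟨key _ (Or.inl ⟨y, by simpa using hy, rfl⟩), fun j hyz η hη => key _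
    (Or.inr (Set.mem_iUnion.2 ⟨j, (y, η), ⟨⟨by simpa using hy, hyz⟩, by simpa using hη⟩, rfl⟩))⟩⟩

/-- At `ζ` the disc `f` is pushed, up to an error `ε`, along the single curve `w j` from the
point `f y` near `z j`, by the amount `σ`. -/
structure IsPushModel (f : ℂ → E) (z : ι → E) (k : ι → ℂ → ℂ) (R ε : ℝ) (j : ι) (ζ y σ : ℂ) :
    Prop where
  norm_le_of_ne : ∀ i, i ≠ j → ‖k i ζ‖ ≤ ε
  norm_base_le : ‖y‖ ≤ 1
  norm_amount_le : ‖σ‖ ≤ 1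
  norm_sub_base_le : ‖ζ - y‖ ≤ ε
  norm_sub_amount_le : ‖k j ζ - σ‖ ≤ ε
  norm_sub_center_le : ‖f y - z j‖ ≤ 3 * R / 4

section FiniteFamily

variable [Fintype ι]

theorem deriv_pushDisc (hf : DifferentiableOn ℂ f (ball 0 1)) (hw : ∀ j, Differentiable ℂ (w j))
    (hk : ∀ j, IsMultiplier (k j)) : deriv (pushDisc f w k) 0 = deriv f 0 := by
  have hball : ball (0 : ℂ) 1 ∈ 𝓝 0 := ball_mem_nhds _ one_pos
  have hpush (j : ι) : HasDerivAt (fun ζ => w j (ζ ^ 2 * k j ζ)) 0 0 := by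
    have hinner : HasDerivAt (fun ζ : ℂ => ζ ^ 2 * k j ζ) 0 0 := by
      simpa using ((hasDerivAt_id' (0 : ℂ)).fun_pow 2).fun_mul
        ((hk j).differentiableOn.differentiableAt hball).hasDerivAt
    simpa only [zero_smul, Function.comp_def] using
      ((hw j) (0 ^ 2 * k j 0)).hasDerivAt.scomp (0 : ℂ) hinner
  have hsum := (hf.differentiableAt hball).hasDerivAt.add
    (HasDerivAt.fun_sum fun j (_ : j ∈ Finset.univ) => hpush j)
  simp only [Finset.sum_const_zero, add_zero] at hsum
  exact hsum.deriv

theorem isDisc_pushDisc {Y : Set E} (hf : IsDisc X f) (hw : ∀ j, Differentiable ℂ (w j))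
    (hk : ∀ j, IsMultiplier (k j)) (hmem : ∀ ζ : ℂ, ‖ζ‖ ≤ 1 → pushDisc f w k ζ ∈ Y) :
    IsDisc Y (pushDisc f w k) where
  continuousOn := by
    refine hf.continuousOn.add (continuousOn_finsetSum _ fun j _ => ?_)
    exact (hw j).continuous.comp_continuousOn ((continuousOn_id.pow 2).mul (hk j).continuousOn)
  differentiableOn := by
    refine hf.differentiableOn.add (DifferentiableOn.fun_sum fun j _ => ?_)
    exact (hw j).comp_differentiableOn ((differentiableOn_id.pow 2).mul (hk j).differentiableOn)
  mem := hmem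

theorem norm_pushDisc_sub_le (hw : ∀ j, IsPushCurve X ρ L R κ (z j) (w j))
    (hk : ∀ j, IsMultiplier (k j)) {ζ : ℂ} (hζ : ‖ζ‖ ≤ 1) {ε : ℝ} (hε : ∀ j, ‖k j ζ‖ ≤ ε) :
    ‖pushDisc f w k ζ - f ζ‖ ≤ Fintype.card ι * ε := by
  rw [pushDisc, add_sub_cancel_left]
  refine (norm_sum_le_of_le _ fun j _ => (norm_curve_sq_mul_le hw hk j hζ).trans (hε j)).trans ?_
  simp

theorem norm_pushDisc_sub_single_le (hw : ∀ j, IsPushCurve X ρ L R κ (z j) (w j))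
    (hk : ∀ j, IsMultiplier (k j)) {ζ : ℂ} (hζ : ‖ζ‖ ≤ 1) {ε : ℝ} (hε : 0 ≤ ε) (j : ι)
    (hne : ∀ i, i ≠ j → ‖k i ζ‖ ≤ ε) :
    ‖pushDisc f w k ζ - (f ζ + w j (ζ ^ 2 * k j ζ))‖ ≤ Fintype.card ι * ε := by
  classical
  rw [pushDisc, ← Finset.add_sum_erase _ _ (Finset.mem_univ j), add_sub_add_left_eq_sub,
    add_sub_cancel_left]
  refine (norm_sum_le_of_le _ fun i hi => (norm_curve_sq_mul_le hw hk i hζ).trans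
    (hne i (Finset.ne_of_mem_erase hi))).trans ?_
  rw [Finset.sum_const, nsmul_eq_mul]
  gcongr
  simp

theorem norm_pushDisc_sub_le_add (hw : ∀ j, IsPushCurve X ρ L R κ (z j) (w j))
    (hk : ∀ j, IsMultiplier (k j)) {ζ : ℂ} (hζ : ‖ζ‖ ≤ 1) {ε : ℝ} (hε : 0 ≤ ε) (j : ι)
    (hne : ∀ i, i ≠ j → ‖k i ζ‖ ≤ ε) :
    ‖pushDisc f w k ζ - f ζ‖ ≤ Fintype.card ι * ε + ‖k j ζ‖ := by
  calc ‖pushDisc f w k ζ - f ζ‖ = ‖(pushDisc f w k ζ - (f ζ + w j (ζ ^ 2 * k j ζ))) +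
        w j (ζ ^ 2 * k j ζ)‖ := by congr 1; abel
    _ ≤ Fintype.card ι * ε + ‖k j ζ‖ := norm_add_le_of_le
      (norm_pushDisc_sub_single_le hw hk hζ hε j hne) (norm_curve_sq_mul_le hw hk j hζ)

theorem norm_pushDisc_sub_model_le (hw : ∀ j, IsPushCurve X ρ L R κ (z j) (w j))
    (hk : ∀ j, IsMultiplier (k j)) {ζ y σ : ℂ} (hζ : ‖ζ‖ ≤ 1) {ε : ℝ} (hε : 0 ≤ ε) {j : ι}
    (h : IsPushModel f z k R ε j ζ y σ) :
    ‖pushDisc f w k ζ - (f y + w j (y ^ 2 * σ))‖ ≤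
      (Fintype.card ι + 3) * ε + ‖f ζ - f y‖ := by
  have hk1 : ‖k j ζ‖ ≤ 1 := (hk j).norm_le_one ζ hζ
  have hcurve : ‖w j (ζ ^ 2 * k j ζ) - w j (y ^ 2 * σ)‖ ≤ 3 * ε := by
    calc _ ≤ ‖ζ ^ 2 * k j ζ - y ^ 2 * σ‖ := (hw j).norm_sub_le _ _
          ((norm_sq_mul_le hζ _).trans hk1) ((norm_sq_mul_le h.norm_base_le _).trans
            h.norm_amount_le)
      _ ≤ 2 * ‖ζ - y‖ + ‖k j ζ - σ‖ := norm_sq_mul_sub_sq_mul_le hζ h.norm_base_le hk1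
      _ ≤ 3 * ε := by linarith [h.norm_sub_base_le, h.norm_sub_amount_le]
  calc ‖pushDisc f w k ζ - (f y + w j (y ^ 2 * σ))‖
      = ‖(pushDisc f w k ζ - (f ζ + w j (ζ ^ 2 * k j ζ))) +
          (w j (ζ ^ 2 * k j ζ) - w j (y ^ 2 * σ)) + (f ζ - f y)‖ := by congr 1; abel
    _ ≤ Fintype.card ι * ε + 3 * ε + ‖f ζ - f y‖ := norm_add₃_le.trans (by
      gcongr
      exact norm_pushDisc_sub_single_le hw hk hζ hε j h.norm_le_of_ne)
    _ = (Fintype.card ι + 3) * ε + ‖f ζ - f y‖ := by ring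

/-- Multipliers that are exact up to `ε` push the disc `f` along the curves `w j` with an error
of at most `δ`, both in position and in the value of `ρ`. -/
structure IsPushTolerance (X : Set E) (ρ : E → ℝ) (f : ℂ → E) (z : ι → E) (w : ι → ℂ → E)
    (R δ ε : ℝ) : Prop where
  pos : 0 < ε
  card_mul_lt : Fintype.card ι * ε < δ
  of_small : ∀ k : ι → ℂ → ℂ, (∀ j, IsMultiplier (k j)) → ∀ ζ : ℂ, ‖ζ‖ ≤ 1 →
    (∀ j, ‖k j ζ‖ ≤ ε) → pushDisc f w k ζ ∈ X ∧ ρ (f ζ) - δ < ρ (pushDisc f w k ζ)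
  of_model : ∀ k : ι → ℂ → ℂ, (∀ j, IsMultiplier (k j)) → ∀ j, ∀ ζ y σ : ℂ, ‖ζ‖ ≤ 1 →
    IsPushModel f z k R ε j ζ y σ →
    pushDisc f w k ζ ∈ X ∧ ρ (f y + w j (y ^ 2 * σ)) - δ < ρ (pushDisc f w k ζ)

theorem eventually_isPushTolerance (hX : IsOpen X) (hρ : ContinuousOn ρ X) (hf : IsDisc X f)
    (hR : 0 < R) (hw : ∀ j, IsPushCurve X ρ L R κ (z j) (w j)) {δ : ℝ} (hδ : 0 < δ) :
    ∀ᶠ ε in 𝓝[>] 0, IsPushTolerance X ρ f z w R δ ε := by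
  obtain ⟨ε₁, hε₁, hnear⟩ := exists_pos_forall_pushed_points hX hρ hf hR hw hδ
  obtain ⟨x, hx, hunif⟩ := Metric.uniformContinuousOn_iff.1
    ((isCompact_closedBall _ _).uniformContinuousOn_of_continuous hf.continuousOn) (ε₁ / 2)
    (by positivity)
  filter_upwards [eventually_nhdsGT_mul_le (Fintype.card ι + 3) (half_pos hε₁),
    eventually_nhdsGT_mul_le (Fintype.card ι) (half_pos hδ), Ioo_mem_nhdsGT hx]
    with ε hsum hcard ⟨hε, hεx⟩
  have hcard' : Fintype.card ι * ε < δ := by linarith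
  refine ⟨hε, hcard', fun k hk ζ hζ hsmall => (hnear ζ hζ).1 _ ?_,
    fun k hk j ζ y σ hζ h => (hnear y h.norm_base_le).2 j h.norm_sub_center_le _
      ((norm_sq_mul_le h.norm_base_le σ).trans h.norm_amount_le) _ ?_⟩
  · linarith [norm_pushDisc_sub_le (f := f) hw hk hζ hsmall]
  · have hfy : ‖f ζ - f y‖ < ε₁ / 2 := by
      rw [← dist_eq_norm]
      exact hunif ζ (by simpa using hζ) y (by simpa using h.norm_base_le)
        (by rw [dist_eq_norm]; exact h.norm_sub_base_le.trans_lt hεx)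
    linarith [norm_pushDisc_sub_model_le hw hk hζ hε.le h]

end FiniteFamily

/-- The disc `g` has the same center and the same derivative there as `f`, is `δ`-close to `f` for
`‖ζ‖ ≤ r`, and `ρ` drops by less than `δ` from `f` to `g`, except that values above the level `h`
may drop to `h - δ`. -/
structure IsDiscPerturbation (X : Set E) (ρ : E → ℝ) (r δ h : ℝ) (f g : ℂ → E) : Prop where
  isDisc : IsDisc X g
  map_zero : g 0 = f 0
  deriv_zero : deriv g 0 = deriv f 0
  norm_sub_lt : ∀ ζ : ℂ, ‖ζ‖ ≤ r → ‖g ζ - f ζ‖ < δ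
  min_sub_lt : ∀ ζ : ℂ, ‖ζ‖ ≤ 1 → min (ρ (f ζ)) h - δ < ρ (g ζ)

namespace IsDiscPerturbation

variable {g u : ℂ → E} {r δ δ' h h' : ℝ}

theorem refl (hf : IsDisc X f) (hδ : 0 < δ) : IsDiscPerturbation X ρ r δ h f f :=
  ⟨hf, rfl, rfl, fun ζ _ => by simpa using hδ, fun ζ _ => by linarith [min_le_left (ρ (f ζ)) h]⟩

theorem mono (hg : IsDiscPerturbation X ρ r δ h f g) (hδ : δ ≤ δ') (hh : h' ≤ h) :
    IsDiscPerturbation X ρ r δ' h' f g :=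
  ⟨hg.isDisc, hg.map_zero, hg.deriv_zero, fun ζ hζ => (hg.norm_sub_lt ζ hζ).trans_le hδ,
    fun ζ hζ => by linarith [hg.min_sub_lt ζ hζ, min_le_min_left (ρ (f ζ)) hh]⟩

theorem trans (hu : IsDiscPerturbation X ρ r δ' h g u) (hg : IsDiscPerturbation X ρ r δ h f g)
    (hδ : 0 ≤ δ) : IsDiscPerturbation X ρ r (δ + δ') h f u where
  isDisc := hu.isDisc
  map_zero := hu.map_zero.trans hg.map_zero
  deriv_zero := hu.deriv_zero.trans hg.deriv_zero
  norm_sub_lt ζ hζ := by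
    linarith [norm_sub_le_norm_sub_add_norm_sub (u ζ) (g ζ) (f ζ), hu.norm_sub_lt ζ hζ,
      hg.norm_sub_lt ζ hζ]
  min_sub_lt ζ hζ := by
    have hmin : min (ρ (f ζ)) h - δ ≤ min (ρ (g ζ)) h :=
      le_min (hg.min_sub_lt ζ hζ).le (by linarith [min_le_right (ρ (f ζ)) h])
    linarith [hu.min_sub_lt ζ hζ]

end IsDiscPerturbation

theorem IsPushTolerance.isDiscPerturbation [Fintype ι] {r δ ε h : ℝ}
    (hε : IsPushTolerance X ρ f z w R δ ε) (hf : IsDisc X f) (hr : r ≤ 1)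
    (hw : ∀ j, IsPushCurve X ρ L R κ (z j) (w j)) (hk : ∀ j, IsMultiplier (k j))
    (hsmall : ∀ ζ : ℂ, ‖ζ‖ ≤ r → ∀ j, ‖k j ζ‖ ≤ ε)
    (hmodel : ∀ ζ : ℂ, ‖ζ‖ ≤ 1 → (∀ j, ‖k j ζ‖ ≤ ε) ∨ ∃ j y σ, IsPushModel f z k R ε j ζ y σ ∧
      min (ρ (f ζ)) h ≤ ρ (f y + w j (y ^ 2 * σ))) :
    IsDiscPerturbation X ρ r δ h f (pushDisc f w k) := by
  have hpush (ζ : ℂ) (hζ : ‖ζ‖ ≤ 1) :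
      pushDisc f w k ζ ∈ X ∧ min (ρ (f ζ)) h - δ < ρ (pushDisc f w k ζ) := by
    rcases hmodel ζ hζ with hall | ⟨j, y, σ, hj, hle⟩
    · obtain ⟨hmem, hlt⟩ := hε.of_small k hk ζ hζ hall
      exact ⟨hmem, by linarith [min_le_left (ρ (f ζ)) h]⟩
    · obtain ⟨hmem, hlt⟩ := hε.of_model k hk j ζ y σ hζ hj
      exact ⟨hmem, by linarith⟩
  have hdiff (j : ι) : Differentiable ℂ (w j) := (hw j).differentiable
  exact ⟨isDisc_pushDisc hf hdiff hk fun ζ hζ => (hpush ζ hζ).1,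
    by simp [pushDisc, (hw _).map_zero], deriv_pushDisc hf.differentiableOn hdiff hk,
    fun ζ hζ => (norm_pushDisc_sub_le hw hk (hζ.trans hr) (hsmall ζ hζ)).trans_lt hε.card_mul_lt,
    fun ζ hζ => (hpush ζ hζ).2⟩

end PushDisc

section Spike

open scoped Topology

/-- A spike of height `s` and width `d` at the boundary point `e`: a nearly real multiplier that
is at least `s` within distance `d` of `e`, at most `2 * s` beyond, and at most `ε` from distance
`ε` on. -/
structure IsSpike (e : ℂ) (s ε d : ℝ) (S : ℂ → ℂ) : Prop where
  isMultiplier : IsMultiplier S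
  norm_sub_norm_le : ∀ ζ : ℂ, ‖ζ‖ ≤ 1 → ‖S ζ - ‖S ζ‖‖ ≤ ε
  le_norm : ∀ ζ : ℂ, ‖ζ‖ ≤ 1 → ‖ζ - e‖ ≤ d → s ≤ ‖S ζ‖
  norm_le_two_mul : ∀ ζ : ℂ, ‖ζ‖ ≤ 1 → d ≤ ‖ζ - e‖ → ‖S ζ‖ ≤ 2 * s
  norm_le : ∀ ζ : ℂ, ‖ζ‖ ≤ 1 → ε ≤ ‖ζ - e‖ → ‖S ζ‖ ≤ ε

theorem IsSpike.comp_mul_conj {s ε d : ℝ} {S : ℂ → ℂ} (hS : IsSpike 1 s ε d S) {e : ℂ}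
    (he : ‖e‖ = 1) : IsSpike e s ε d fun ζ => S (ζ * (starRingEnd ℂ) e) := by
  have hconj : ‖(starRingEnd ℂ) e‖ = 1 := by simpa using he
  have hnorm (ζ : ℂ) : ‖ζ * (starRingEnd ℂ) e‖ = ‖ζ‖ := by rw [norm_mul, hconj, mul_one]
  have hdist (ζ : ℂ) : ‖ζ * (starRingEnd ℂ) e - 1‖ = ‖ζ - e‖ := by
    have hone : e * (starRingEnd ℂ) e = 1 := by simp [Complex.mul_conj', he]
    rw [← hone, ← sub_mul, norm_mul, hconj, mul_one]
  exact ⟨hS.isMultiplier.comp_mul hconj,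
    fun ζ hζ => hS.norm_sub_norm_le _ (by rwa [hnorm]),
    fun ζ hζ h => hS.le_norm _ (by rwa [hnorm]) (by rwa [hdist]),
    fun ζ hζ h => hS.norm_le_two_mul _ (by rwa [hnorm]) (by rwa [hdist]),
    fun ζ hζ h => hS.norm_le _ (by rwa [hnorm]) (by rwa [hdist])⟩

theorem norm_cpow_sub_norm_le {z : ℂ} (hz : z ≠ 0) (β : ℝ) :
    ‖z ^ (β : ℂ) - ‖z ^ (β : ℂ)‖‖ ≤ ‖z‖ ^ β * (|β| * Real.pi) := by
  have hpolar : z ^ (β : ℂ) = ‖z ^ (β : ℂ)‖ * Complex.exp (Complex.I * ((β * z.arg : ℝ) : ℂ)) := by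
    rw [Complex.cpow_def_of_ne_zero hz, Complex.norm_exp, Complex.ofReal_exp, ← Complex.exp_add]
    congr 1
    apply Complex.ext <;> simp [Complex.log_re, Complex.log_im, mul_comm]
  calc ‖z ^ (β : ℂ) - ‖z ^ (β : ℂ)‖‖
      = ‖(‖z ^ (β : ℂ)‖ : ℂ) * (Complex.exp (Complex.I * ((β * z.arg : ℝ) : ℂ)) - 1)‖ := by
        rw [mul_sub_one, ← hpolar]
    _ = ‖z‖ ^ β * ‖Complex.exp (Complex.I * ((β * z.arg : ℝ) : ℂ)) - 1‖ := by
        rw [norm_mul, Complex.norm_real, norm_norm, Complex.norm_cpow_real]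
    _ ≤ ‖z‖ ^ β * (|β| * Real.pi) := by
        gcongr
        refine Real.norm_exp_I_mul_ofReal_sub_one_le.trans ?_
        rw [norm_mul, Real.norm_eq_abs, Real.norm_eq_abs]
        gcongr
        exact Complex.abs_arg_le_pi z

variable {A : ℝ} {ζ : ℂ}

theorem one_le_re_one_add_mul_one_sub (hA : 0 ≤ A) (hζ : ‖ζ‖ ≤ 1) :
    1 ≤ (1 + (A : ℂ) * (1 - ζ)).re := by
  have hre : 0 ≤ A * (1 - ζ.re) := mul_nonneg hA (by linarith [Complex.re_le_norm ζ])
  simpa using hre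

theorem one_le_norm_one_add_mul_one_sub (hA : 0 ≤ A) (hζ : ‖ζ‖ ≤ 1) :
    1 ≤ ‖1 + (A : ℂ) * (1 - ζ)‖ :=
  (one_le_re_one_add_mul_one_sub hA hζ).trans (Complex.re_le_norm _)

theorem mul_norm_one_sub_le (hA : 0 ≤ A) (hζ : ‖ζ‖ ≤ 1) :
    A * ‖1 - ζ‖ ≤ ‖1 + (A : ℂ) * (1 - ζ)‖ := by
  have hre := one_le_re_one_add_mul_one_sub hA hζ
  have hmul : A * ‖1 - ζ‖ = ‖(A : ℂ) * (1 - ζ)‖ := by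
    rw [norm_mul, Complex.norm_real, Real.norm_of_nonneg hA]
  rw [hmul, ← sq_le_sq₀ (norm_nonneg _) (norm_nonneg _), ← Complex.normSq_eq_norm_sq,
    ← Complex.normSq_eq_norm_sq, add_comm, Complex.normSq_add]
  simp only [Complex.add_re, Complex.one_re, map_one, mul_one] at hre ⊢
  linarith

/-- The spike `(1 + A * (1 - ζ)) ^ (-α)` at `1`; it is nearly real because `α` is small, and
concentrated because `A` is large. -/
noncomputable def spike (A α : ℝ) (ζ : ℂ) : ℂ :=
  (1 + (A : ℂ) * (1 - ζ)) ^ ((-α : ℝ) : ℂ)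

theorem norm_spike (A α : ℝ) (ζ : ℂ) : ‖spike A α ζ‖ = ‖1 + (A : ℂ) * (1 - ζ)‖ ^ (-α) :=
  Complex.norm_cpow_real _ _

theorem norm_spike_le_one (hA : 0 ≤ A) {α : ℝ} (hα : 0 ≤ α) (hζ : ‖ζ‖ ≤ 1) :
    ‖spike A α ζ‖ ≤ 1 := by
  rw [norm_spike]
  exact Real.rpow_le_one_of_one_le_of_nonpos (one_le_norm_one_add_mul_one_sub hA hζ)
    (neg_nonpos.2 hα)

theorem norm_spike_le {α b : ℝ} (hα : 0 ≤ α) (hb : 0 < b)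
    (h : b ≤ ‖1 + (A : ℂ) * (1 - ζ)‖) : ‖spike A α ζ‖ ≤ b ^ (-α) := by
  rw [norm_spike]
  exact Real.rpow_le_rpow_of_nonpos hb h (neg_nonpos.2 hα)

theorem isMultiplier_spike (hA : 0 ≤ A) {α : ℝ} (hα : 0 ≤ α) : IsMultiplier (spike A α) := by
  have hslit (ζ : ℂ) (hζ : ‖ζ‖ ≤ 1) : 1 + (A : ℂ) * (1 - ζ) ∈ Complex.slitPlane :=
    Or.inl (one_pos.trans_le (one_le_re_one_add_mul_one_sub hA hζ))
  refine ⟨ContinuousOn.cpow (by fun_prop) continuousOn_const fun ζ hζ =>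
      hslit ζ (by simpa using hζ),
    DifferentiableOn.cpow (by fun_prop) (differentiableOn_const _) fun ζ hζ =>
      hslit ζ (by simpa using ball_subset_closedBall hζ), fun ζ hζ => norm_spike_le_one hA hα hζ⟩

theorem norm_spike_sub_norm_le (hA : 0 ≤ A) {α : ℝ} (hα : 0 ≤ α) (hζ : ‖ζ‖ ≤ 1) :
    ‖spike A α ζ - ‖spike A α ζ‖‖ ≤ α * Real.pi := by
  have hne : 1 + (A : ℂ) * (1 - ζ) ≠ 0 :=
    norm_pos_iff.1 (one_pos.trans_le (one_le_norm_one_add_mul_one_sub hA hζ))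
  have hle := norm_spike_le_one hA hα hζ
  rw [norm_spike] at hle
  calc ‖spike A α ζ - ‖spike A α ζ‖‖
      ≤ ‖1 + (A : ℂ) * (1 - ζ)‖ ^ (-α) * (|-α| * Real.pi) := norm_cpow_sub_norm_le hne (-α)
    _ ≤ 1 * (|-α| * Real.pi) := by gcongr
    _ = α * Real.pi := by rw [one_mul, abs_neg, abs_of_nonneg hα]

theorem eventually_exists_isSpike {e : ℂ} (he : ‖e‖ = 1) {s ε : ℝ} (hs : 0 < s) (hs1 : s < 1)
    (hε : 0 < ε) : ∀ᶠ d in 𝓝[>] 0, ∃ S, IsSpike e s ε d S := by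
  obtain ⟨α, hα, hα1, hαε⟩ : ∃ α > 0, α ≤ 1 ∧ α * Real.pi ≤ ε :=
    ⟨min 1 (ε / Real.pi), by positivity, min_le_left _ _,
      (le_div_iff₀ Real.pi_pos).1 (min_le_right _ _)⟩
  set B : ℝ := s ^ (-α⁻¹)
  have hB1 : 1 < B := Real.one_lt_rpow_of_pos_of_lt_one_of_neg hs hs1 (by simpa using hα)
  have hpow (x : ℝ) (hx : 0 < x) : (x ^ (-α⁻¹)) ^ (-α) = x := by
    rw [← Real.rpow_mul hx.le, neg_mul_neg, inv_mul_cancel₀ hα.ne', Real.rpow_one]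
  filter_upwards [self_mem_nhdsWithin,
    eventually_nhdsGT_mul_le (ε ^ (-α⁻¹)) (mul_pos (sub_pos.2 hB1) hε)] with d hd hdε
  have hd0 : 0 < d := hd
  set A : ℝ := (B - 1) / d
  have hA : 0 ≤ A := div_nonneg (by linarith) hd0.le
  have hAd : A * d = B - 1 := div_mul_cancel₀ _ hd0.ne'
  refine ⟨_, IsSpike.comp_mul_conj (S := spike A α) ⟨isMultiplier_spike hA hα.le,
    fun ζ hζ => (norm_spike_sub_norm_le hA hα.le hζ).trans hαε, fun ζ hζ hle => ?_,
    fun ζ hζ hle => ?_, fun ζ hζ hle => ?_⟩ he⟩ <;> rw [norm_sub_rev] at hle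
  · rw [norm_spike, ← hpow s hs]
    refine Real.rpow_le_rpow_of_nonpos (one_pos.trans_le (one_le_norm_one_add_mul_one_sub hA hζ))
      ((norm_add_le _ _).trans ?_) (by linarith)
    rw [norm_one, norm_mul, Complex.norm_real, Real.norm_of_nonneg hA]
    linarith [mul_le_mul_of_nonneg_left hle hA]
  · calc ‖spike A α ζ‖ ≤ (B / 2) ^ (-α) := norm_spike_le hα.le (by positivity) (by
          linarith [one_le_norm_one_add_mul_one_sub hA hζ, mul_norm_one_sub_le hA hζ,
            mul_le_mul_of_nonneg_left hle hA])
      _ = 2 ^ α * s := by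
        rw [Real.div_rpow (by positivity) zero_le_two, hpow s hs, Real.rpow_neg zero_le_two,
          div_inv_eq_mul, mul_comm]
      _ ≤ 2 ^ (1 : ℝ) * s := by gcongr; norm_num
      _ = 2 * s := by rw [Real.rpow_one]
  · calc ‖spike A α ζ‖ ≤ (ε ^ (-α⁻¹)) ^ (-α) := norm_spike_le hα.le (by positivity) (by
          refine le_trans ?_ ((mul_le_mul_of_nonneg_left hle hA).trans (mul_norm_one_sub_le hA hζ))
          rwa [div_mul_eq_mul_div, le_div_iff₀ hd0, mul_comm])
      _ = ε := hpow ε hε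

end Spike

section Cap

open scoped ComplexConjugate

theorem sq_norm_add_sub_sq_norm_sub (a b : ℂ) :
    ‖a + b‖ ^ 2 - ‖a - b‖ ^ 2 = 4 * (a * conj b).re := by
  rw [← Complex.normSq_eq_norm_sq, ← Complex.normSq_eq_norm_sq, Complex.normSq_add,
    Complex.normSq_sub]
  ring

theorem norm_sub_le_norm_add_of_re_mul_conj_nonneg {a b : ℂ} (h : 0 ≤ (a * conj b).re) :
    ‖a - b‖ ≤ ‖a + b‖ := by
  rw [← sq_le_sq₀ (norm_nonneg _) (norm_nonneg _)]
  linarith [sq_norm_add_sub_sq_norm_sub a b]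

theorem norm_sub_eq_norm_add_iff {a b : ℂ} : ‖a - b‖ = ‖a + b‖ ↔ (a * conj b).re = 0 := by
  rw [← sq_eq_sq₀ (norm_nonneg _) (norm_nonneg _)]
  constructor <;> intro h <;> linarith [sq_norm_add_sub_sq_norm_sub a b]

theorem sub_div_add_sq_eq_norm {a b : ℂ} (h : (a * conj b).im = 0) :
    ((a - b) / (a + b)) ^ 2 = ‖((a - b) / (a + b)) ^ 2‖ := by
  have him : ((a - b) / (a + b)).im = 0 := by
    simp only [Complex.mul_im, Complex.conj_re, Complex.conj_im] at h
    rw [Complex.div_im, ← sub_div]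
    simp only [Complex.sub_im, Complex.add_re, Complex.sub_re, Complex.add_im]
    rw [div_eq_zero_iff]
    left
    linear_combination 2 * h
  lift (a - b) / (a + b) to ℝ using him with x
  simp [← Complex.ofReal_pow]

theorem re_mul_conj_nonneg {a b : ℂ} (ha : 0 ≤ a.re) (hb : 0 ≤ b.re) (ha2 : 0 ≤ (a ^ 2).re)
    (hb2 : 0 ≤ (b ^ 2).re) : 0 ≤ (a * conj b).re := by
  simp only [pow_two, Complex.mul_re, Complex.conj_re, Complex.conj_im] at *
  have ha' : |a.im| ≤ a.re := abs_le_of_sq_le_sq (by linarith) ha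
  have hb' : |b.im| ≤ b.re := abs_le_of_sq_le_sq (by linarith) hb
  have hab : |a.im * b.im| ≤ a.re * b.re := by rw [abs_mul]; gcongr
  linarith [(abs_le.1 hab).1]

theorem re_nonneg_of_sq_im_nonpos {κ T : ℂ} (hre : 0 < κ.re) (him : 0 < κ.im)
    (hκT : 0 ≤ (κ * T).re) (hT : (T ^ 2).im ≤ 0) : 0 ≤ T.re := by
  simp only [pow_two, Complex.mul_re, Complex.mul_im] at hκT hT
  by_contra! h
  have hTim : 0 ≤ T.im := by nlinarith
  nlinarith [mul_pos hre (neg_pos.2 h), mul_nonneg him.le hTim]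

/-- The principal square root of `1 - ζ * κ ^ 2`. -/
noncomputable def capRoot (κ ζ : ℂ) : ℂ := (1 - ζ * κ ^ 2) ^ (2⁻¹ : ℂ)

/-- The pairing `a * conj (κ * b)` of the two square roots `a` and `κ * b` defining `cap κ`. -/
noncomputable def capPairing (κ ζ : ℂ) : ℂ := capRoot κ ζ * conj (κ * capRoot (conj κ) ζ)

/-- For `κ = exp (i * φ / 2)` the square of a conformal map of the disc onto a half disc: it is
unimodular on the arc of half angle `φ` around `1`, and real on the rest of the circle.
The quotient of `a = √(1 - ζ * κ ^ 2)` by `κ * b`, with `b = √(1 - ζ * conj κ ^ 2)`, maps the disc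
onto a quadrant, and a Cayley transform maps this quadrant onto the half disc. -/
noncomputable def cap (κ ζ : ℂ) : ℂ :=
  ((capRoot κ ζ - κ * capRoot (conj κ) ζ) / (capRoot κ ζ + κ * capRoot (conj κ) ζ)) ^ 2

theorem capRoot_sq (κ ζ : ℂ) : capRoot κ ζ ^ 2 = 1 - ζ * κ ^ 2 :=
  Complex.cpow_nat_inv_pow _ two_ne_zero

theorem capRoot_re_nonneg (κ ζ : ℂ) : 0 ≤ (capRoot κ ζ).re := by
  rw [capRoot, Complex.cpow_inv_two_re]
  positivity

variable {κ ζ : ℂ}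

theorem one_sub_norm_le_re_one_sub_mul_sq (hκ : ‖κ‖ = 1) (ζ : ℂ) :
    1 - ‖ζ‖ ≤ (1 - ζ * κ ^ 2).re := by
  have hre : (ζ * κ ^ 2).re ≤ ‖ζ‖ := (Complex.re_le_norm _).trans (by simp [hκ])
  rw [Complex.sub_re, Complex.one_re]
  linarith

theorem continuousOn_capRoot (hκ : ‖κ‖ = 1) : ContinuousOn (capRoot κ) (closedBall 0 1) := by
  intro ζ hζ
  have hre : 0 ≤ (1 - ζ * κ ^ 2).re := by
    linarith [one_sub_norm_le_re_one_sub_mul_sq hκ ζ, mem_closedBall_zero_iff.1 hζ]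
  have hcpow : ContinuousAt (fun z : ℂ => z ^ (2⁻¹ : ℂ)) (1 - ζ * κ ^ 2) :=
    Complex.continuousAt_cpow_const_of_re_pos (Or.inl hre) (by norm_num)
  exact (ContinuousAt.comp (f := fun ζ : ℂ => 1 - ζ * κ ^ 2) hcpow
    (by fun_prop)).continuousWithinAt

theorem differentiableOn_capRoot (hκ : ‖κ‖ = 1) : DifferentiableOn ℂ (capRoot κ) (ball 0 1) :=
  DifferentiableOn.cpow (by fun_prop) (differentiableOn_const _) fun ζ hζ => Or.inl (by
    linarith [one_sub_norm_le_re_one_sub_mul_sq hκ ζ, mem_ball_zero_iff.1 hζ])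

theorem capPairing_sq (hκ : ‖κ‖ = 1) (ζ : ℂ) :
    capPairing κ ζ ^ 2 = conj κ ^ 2 + κ ^ 2 * (‖ζ‖ ^ 2 : ℝ) - (2 * ζ.re : ℝ) := by
  have hone : κ * conj κ = 1 := by simp [Complex.mul_conj', hκ]
  have hnorm : ((‖ζ‖ ^ 2 : ℝ) : ℂ) = ζ * conj ζ := by rw [Complex.mul_conj']; norm_cast
  have hre : ((2 * ζ.re : ℝ) : ℂ) = ζ + conj ζ := (Complex.add_conj ζ).symm
  rw [hnorm, hre, capPairing, map_mul, mul_pow, mul_pow, ← map_pow conj (capRoot _ _), capRoot_sq,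
    capRoot_sq]
  simp only [map_sub, map_mul, map_pow, map_one, Complex.conj_conj]
  linear_combination (-ζ - conj ζ + ζ * conj ζ * κ ^ 2) * (κ * conj κ + 1) * hone

theorem capPairing_sq_re (hκ : ‖κ‖ = 1) (hζ : ‖ζ‖ = 1) :
    (capPairing κ ζ ^ 2).re = 2 * ((κ ^ 2).re - ζ.re) := by
  rw [capPairing_sq hκ, hζ, ← map_pow, Complex.sub_re, Complex.add_re, Complex.conj_re,
    Complex.ofReal_re, one_pow, Complex.ofReal_one, mul_one]
  ring

theorem capPairing_sq_im (hκ : ‖κ‖ = 1) (ζ : ℂ) :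
    (capPairing κ ζ ^ 2).im = (‖ζ‖ ^ 2 - 1) * (2 * (κ.re * κ.im)) := by
  rw [capPairing_sq hκ, Complex.sub_im, Complex.add_im, Complex.ofReal_im, Complex.im_mul_ofReal]
  simp only [pow_two, Complex.mul_im, Complex.conj_re, Complex.conj_im, mul_neg, neg_mul, sub_zero]
  ring

theorem capPairing_re_nonneg (hκ : ‖κ‖ = 1) (hre : 0 < κ.re) (him : 0 < κ.im) (hζ : ‖ζ‖ ≤ 1) :
    0 ≤ (capPairing κ ζ).re := by
  have hconj : ‖conj κ‖ = 1 := by simpa using hκ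
  have hone : κ * conj κ = 1 := by simp [Complex.mul_conj', hκ]
  refine re_nonneg_of_sq_im_nonpos hre him ?_ ?_
  · have hmul : κ * capPairing κ ζ = capRoot κ ζ * conj (capRoot (conj κ) ζ) := by
      rw [capPairing, map_mul]
      linear_combination (capRoot κ ζ * conj (capRoot (conj κ) ζ)) * hone
    rw [hmul]
    refine re_mul_conj_nonneg (capRoot_re_nonneg _ _) (capRoot_re_nonneg _ _) ?_ ?_ <;>
      rw [capRoot_sq]
    · linarith [one_sub_norm_le_re_one_sub_mul_sq hκ ζ]
    · linarith [one_sub_norm_le_re_one_sub_mul_sq hconj ζ]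
  · rw [capPairing_sq_im hκ]
    exact mul_nonpos_of_nonpos_of_nonneg
      (by linarith [pow_le_one₀ (n := 2) (norm_nonneg ζ) hζ]) (by positivity)

theorem capPairing_re_mul_im (hκ : ‖κ‖ = 1) (ζ : ℂ) :
    (capPairing κ ζ).re * (capPairing κ ζ).im = (‖ζ‖ ^ 2 - 1) * (κ.re * κ.im) := by
  have h := capPairing_sq_im hκ ζ
  rw [pow_two, Complex.mul_im] at h
  linarith

theorem capPairing_re_sq_sub_im_sq (hκ : ‖κ‖ = 1) (hζ : ‖ζ‖ = 1) :
    (capPairing κ ζ).re ^ 2 - (capPairing κ ζ).im ^ 2 = 2 * ((κ ^ 2).re - ζ.re) := by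
  rw [← capPairing_sq_re hκ hζ, pow_two (capPairing κ ζ), Complex.mul_re]
  ring

theorem capPairing_re_eq_zero_iff (hκ : ‖κ‖ = 1) (hre : 0 < κ.re) (him : 0 < κ.im) :
    (capPairing κ ζ).re = 0 ↔ ‖ζ‖ = 1 ∧ (κ ^ 2).re ≤ ζ.re := by
  have hmul := capPairing_re_mul_im hκ ζ
  constructor
  · intro h
    rw [h, zero_mul, eq_comm, mul_eq_zero, or_iff_left (mul_pos hre him).ne', sub_eq_zero,
      pow_eq_one_iff_of_nonneg (norm_nonneg _) two_ne_zero] at hmul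
    refine ⟨hmul, ?_⟩
    nlinarith [capPairing_re_sq_sub_im_sq hκ hmul]
  · rintro ⟨hζ, hle⟩
    rw [hζ, one_pow, sub_self, zero_mul, mul_eq_zero] at hmul
    rcases hmul with h | h
    · exact h
    · have hsq := capPairing_re_sq_sub_im_sq hκ hζ
      rw [h] at hsq
      nlinarith

theorem capPairing_im_eq_zero (hκ : ‖κ‖ = 1) (hζ : ‖ζ‖ = 1) (hle : ζ.re ≤ (κ ^ 2).re) :
    (capPairing κ ζ).im = 0 := by
  have hmul := capPairing_re_mul_im hκ ζ
  rw [hζ, one_pow, sub_self, zero_mul, mul_eq_zero] at hmul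
  rcases hmul with h | h
  · have hsq := capPairing_re_sq_sub_im_sq hκ hζ
    rw [h] at hsq
    nlinarith
  · exact h

theorem capRoot_ne_zero_or (hκ : ‖κ‖ = 1) (hre : 0 < κ.re) (him : 0 < κ.im) (ζ : ℂ) :
    capRoot κ ζ ≠ 0 ∨ κ * capRoot (conj κ) ζ ≠ 0 := by
  by_contra! h
  have hκ0 : κ ≠ 0 := norm_pos_iff.1 (by rw [hκ]; exact one_pos)
  have hpos : ζ * κ ^ 2 = 1 := by
    have := capRoot_sq κ ζ
    rw [h.1, zero_pow two_ne_zero] at this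
    linear_combination this
  have hneg : ζ * conj κ ^ 2 = 1 := by
    have := capRoot_sq (conj κ) ζ
    rw [(mul_eq_zero.1 h.2).resolve_left hκ0, zero_pow two_ne_zero] at this
    linear_combination this
  have him' := congrArg Complex.im (mul_left_cancel₀ (left_ne_zero_of_mul_eq_one hpos)
    (hpos.trans hneg.symm))
  simp only [pow_two, Complex.mul_im, Complex.conj_re, Complex.conj_im] at him'
  nlinarith [mul_pos hre him]

theorem cap_denominator_ne_zero (hκ : ‖κ‖ = 1) (hre : 0 < κ.re) (him : 0 < κ.im) (hζ : ‖ζ‖ ≤ 1) :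
    capRoot κ ζ + κ * capRoot (conj κ) ζ ≠ 0 := by
  intro h
  have hsub := norm_sub_le_norm_add_of_re_mul_conj_nonneg (capPairing_re_nonneg hκ hre him hζ)
  rw [h, norm_zero, norm_le_zero_iff] at hsub
  rcases capRoot_ne_zero_or hκ hre him ζ with hne | hne
  · exact hne (by linear_combination (h + hsub) / 2)
  · exact hne (by linear_combination (h - hsub) / 2)

theorem isMultiplier_cap (hκ : ‖κ‖ = 1) (hre : 0 < κ.re) (him : 0 < κ.im) :
    IsMultiplier (cap κ) := by
  have hconj : ‖conj κ‖ = 1 := by simpa using hκ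
  refine IsMultiplier.pow ⟨?_, ?_, fun ζ hζ => ?_⟩ 2
  · have hb : ContinuousOn (fun ζ => κ * capRoot (conj κ) ζ) (closedBall 0 1) :=
      continuousOn_const.mul (continuousOn_capRoot hconj)
    exact ((continuousOn_capRoot hκ).sub hb).div ((continuousOn_capRoot hκ).add hb)
      fun ζ hζ => cap_denominator_ne_zero hκ hre him (by simpa using hζ)
  · have hb := (differentiableOn_capRoot hconj).const_mul κ
    exact ((differentiableOn_capRoot hκ).sub hb).div ((differentiableOn_capRoot hκ).add hb)
      fun ζ hζ => cap_denominator_ne_zero hκ hre him (by simpa using ball_subset_closedBall hζ)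
  · rw [norm_div]
    exact div_le_one_of_le₀ (norm_sub_le_norm_add_of_re_mul_conj_nonneg
      (capPairing_re_nonneg hκ hre him hζ)) (norm_nonneg _)

theorem norm_cap_eq_one_iff (hκ : ‖κ‖ = 1) (hre : 0 < κ.re) (him : 0 < κ.im) (hζ : ‖ζ‖ ≤ 1) :
    ‖cap κ ζ‖ = 1 ↔ ‖ζ‖ = 1 ∧ (κ ^ 2).re ≤ ζ.re := by
  rw [cap, norm_pow, pow_eq_one_iff_of_nonneg (norm_nonneg _) two_ne_zero, norm_div,
    div_eq_one_iff_eq (norm_ne_zero_iff.2 (cap_denominator_ne_zero hκ hre him hζ)),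
    norm_sub_eq_norm_add_iff, ← capPairing_re_eq_zero_iff hκ hre him, capPairing]

theorem cap_eq_norm (hκ : ‖κ‖ = 1) (hζ : ‖ζ‖ = 1) (hle : ζ.re ≤ (κ ^ 2).re) :
    cap κ ζ = ‖cap κ ζ‖ :=
  sub_div_add_sq_eq_norm (capPairing_im_eq_zero hκ hζ hle)

/-- The closed arc of the unit circle with center `c` and half angle `φ`. -/
def closedArc (c : ℂ) (φ : ℝ) : Set ℂ := {ζ | ‖ζ‖ = 1 ∧ Real.cos φ ≤ (ζ * conj c).re}

/-- A multiplier that is unimodular exactly on the arc `closedArc c φ`, and a nonnegative real on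
the rest of the unit circle. -/
structure IsCap (c : ℂ) (φ : ℝ) (H : ℂ → ℂ) : Prop where
  isMultiplier : IsMultiplier H
  norm_eq_one_iff : ∀ ζ : ℂ, ‖ζ‖ ≤ 1 → (‖H ζ‖ = 1 ↔ ζ ∈ closedArc c φ)
  eq_norm : ∀ ζ : ℂ, ‖ζ‖ = 1 → (ζ * conj c).re ≤ Real.cos φ → H ζ = ‖H ζ‖

theorem exists_isCap {c : ℂ} (hc : ‖c‖ = 1) {φ : ℝ} (hφ0 : 0 < φ) (hφπ : φ < Real.pi) :
    ∃ H, IsCap c φ H := by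
  set κ : ℂ := Complex.exp ((φ / 2 : ℝ) * Complex.I) with hκ_def
  have hκ : ‖κ‖ = 1 := Complex.norm_exp_ofReal_mul_I _
  have hre : 0 < κ.re := by
    rw [Complex.exp_ofReal_mul_I_re]
    exact Real.cos_pos_of_mem_Ioo ⟨by linarith, by linarith⟩
  have him : 0 < κ.im := by
    rw [Complex.exp_ofReal_mul_I_im]
    exact Real.sin_pos_of_pos_of_lt_pi (by linarith) (by linarith)
  have hcos : (κ ^ 2).re = Real.cos φ := by
    rw [← Complex.exp_ofReal_mul_I_re, hκ_def, ← Complex.exp_nat_mul]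
    push_cast
    ring_nf
  have hconj : ‖conj c‖ = 1 := by simpa using hc
  have hnorm (ζ : ℂ) : ‖ζ * conj c‖ = ‖ζ‖ := by rw [norm_mul, hconj, mul_one]
  refine ⟨fun ζ => cap κ (ζ * conj c), (isMultiplier_cap hκ hre him).comp_mul hconj,
    fun ζ hζ => ?_, fun ζ hζ hle => cap_eq_norm hκ (by rwa [hnorm]) (by rwa [hcos])⟩
  rw [norm_cap_eq_one_iff hκ hre him (by rwa [hnorm]), hnorm, hcos]
  rfl

theorem norm_mul_exp_ofReal_mul_I {c : ℂ} (hc : ‖c‖ = 1) (x : ℝ) :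
    ‖c * Complex.exp (x * Complex.I)‖ = 1 := by
  rw [norm_mul, hc, Complex.norm_exp_ofReal_mul_I, one_mul]

theorem re_mul_exp_mul_conj {c : ℂ} (hc : ‖c‖ = 1) (x : ℝ) :
    (c * Complex.exp (x * Complex.I) * conj c).re = Real.cos x := by
  have hone : c * conj c = 1 := by simp [Complex.mul_conj', hc]
  rw [mul_right_comm, hone, one_mul, Complex.exp_ofReal_mul_I_re]

theorem eq_mul_exp_of_re_mul_conj_eq_cos {c ζ : ℂ} (hc : ‖c‖ = 1) (hζ : ‖ζ‖ = 1) {φ : ℝ}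
    (h : (ζ * conj c).re = Real.cos φ) :
    ζ = c * Complex.exp (φ * Complex.I) ∨ ζ = c * Complex.exp ((-φ : ℝ) * Complex.I) := by
  have hone : conj c * c = 1 := by simp [Complex.conj_mul', hc]
  obtain ⟨x, hx⟩ := (Complex.norm_eq_one_iff (ζ * conj c)).1 (by simp [hζ, hc])
  have hζx : ζ = c * Complex.exp (x * Complex.I) := by
    rw [hx]
    linear_combination (-ζ) * hone
  rw [← hx, Complex.exp_ofReal_mul_I_re] at h
  have hsin : Real.sin x ^ 2 = Real.sin φ ^ 2 := by rw [Real.sin_sq, Real.sin_sq, h]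
  rw [hζx]
  refine (sq_eq_sq_iff_eq_or_eq_neg.1 hsin).imp (fun hs => ?_) fun hs => ?_ <;> congr 1 <;>
    apply Complex.ext <;>
    simp only [Complex.exp_ofReal_mul_I_re, Complex.exp_ofReal_mul_I_im, Real.cos_neg,
      Real.sin_neg, h, hs]

end Cap

section SpikedDisc

open scoped Topology

variable {E : Type*} [NormedAddCommGroup E] {X : Set E} {ρ : E → ℝ} {f : ℂ → E}
  {ι : Type*} {e : ι → ℂ} {w : ι → ℂ → E} {b : ι → ℂ} {S : ι → ℂ → ℂ} {m L R κ s ε d : ℝ}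

theorem eventually_forall_ne_two_mul_le_norm_sub [Finite ι] (he : Function.Injective e) :
    ∀ᶠ ε : ℝ in 𝓝[>] 0, ∀ i j, i ≠ j → ε * 2 ≤ ‖e i - e j‖ := by
  refine Filter.eventually_all.2 fun i => Filter.eventually_all.2 fun j => ?_
  by_cases hij : i = j
  · simp [hij]
  · filter_upwards [eventually_nhdsGT_mul_le 2 (norm_pos_iff.2 (sub_ne_zero.2 (he.ne hij)))]
      with ε hε _ using hε

theorem IsSpike.norm_le_of_ne (hS : ∀ j, IsSpike (e j) s ε d (S j))
    (hsep : ∀ i j, i ≠ j → ε * 2 ≤ ‖e i - e j‖) {ζ : ℂ} (hζ : ‖ζ‖ ≤ 1) {i j : ι} (hij : i ≠ j)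
    (hj : ‖ζ - e j‖ < ε) : ‖S i ζ‖ ≤ ε := by
  refine (hS i).norm_le ζ hζ ?_
  have htri := norm_sub_le_norm_sub_add_norm_sub (e i) ζ (e j)
  rw [norm_sub_rev (e i) ζ] at htri
  linarith [hsep i j hij]

theorem isPushModel_spike (he : ∀ j, ‖e j‖ = 1) (hS : ∀ j, IsSpike (e j) s ε d (S j))
    (hb : ∀ j, ‖b j‖ = 1) (hsep : ∀ i j, i ≠ j → ε * 2 ≤ ‖e i - e j‖) (hR : 0 ≤ R) {ζ : ℂ}
    (hζ : ‖ζ‖ ≤ 1) {j : ι} (hj : ‖ζ - e j‖ < ε) :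
    IsPushModel f (fun i => f (e i)) (fun i ζ => b i * S i ζ) R ε j ζ (e j) (b j * ‖S j ζ‖) where
  norm_le_of_ne i hij := by
    simpa [hb] using IsSpike.norm_le_of_ne hS hsep hζ hij hj
  norm_base_le := (he j).le
  norm_amount_le := by
    simpa [hb] using (hS j).isMultiplier.norm_le_one ζ hζ
  norm_sub_base_le := hj.le
  norm_sub_amount_le := by
    simpa only [← mul_sub, norm_mul, hb, one_mul] using (hS j).norm_sub_norm_le ζ hζ
  norm_sub_center_le := by
    rw [sub_self, norm_zero]
    positivity

variable [NormedSpace ℂ E]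

theorem exists_spike_rotation (hf : IsDisc X f) (hR : 0 < R) {e : ℂ} (he : ‖e‖ = 1)
    (hm : m ≤ ρ (f e)) {w : ℂ → E} (hw : IsPushCurve X ρ L R κ (f e) w) :
    ∃ b : ℂ, ‖b‖ = 1 ∧ ∀ t : ℝ, 0 ≤ t → t ≤ 1 →
      min (m + κ * t ^ 2) L ≤ ρ (f e + w (e ^ 2 * (b * t))) := by
  have hmem := hf.mem e he.le
  have hself : ‖f e - f e‖ < R := by simpa using hR
  have hsq : ‖e ^ 2‖ = 1 := by simp [he]
  obtain ⟨b, hb, hrot⟩ := hw.exists_rotation hmem hself hmem hself hsq hsq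
  refine ⟨b, hb, fun t ht0 ht1 => ?_⟩
  rw [mul_left_comm]
  exact (min_le_min_right _ (by gcongr)).trans (hrot t ht0 ht1).1

/-- A perturbation `g` of the disc `f` which reaches the level `a`, up to `δ`, at distance at most
`d` from one of the points `e i`, and moves the rest of the disc by less than `R / 4`. -/
structure IsSpikedDisc (X : Set E) (ρ : E → ℝ) (r δ m a R : ℝ) (e : ι → ℂ) (d : ℝ) (f g : ℂ → E) :
    Prop extends IsDiscPerturbation X ρ r δ m f g where
  lt_of_norm_sub_le : ∀ ζ : ℂ, ‖ζ‖ ≤ 1 → ∀ i, ‖ζ - e i‖ ≤ d → a - δ < ρ (g ζ)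
  norm_sub_lt_of_le : ∀ ζ : ℂ, ‖ζ‖ ≤ 1 → (∀ i, d ≤ ‖ζ - e i‖) → ‖g ζ - f ζ‖ < R / 4

theorem isSpikedDisc_pushDisc [Fintype ι] (hf : IsDisc X f) (hmL : m ≤ L) (hR : 0 < R)
    (hκ : 0 ≤ κ) (he : ∀ j, ‖e j‖ = 1) (hw : ∀ j, IsPushCurve X ρ L R κ (f (e j)) (w j))
    (hs : 0 ≤ s) (hsR : s ≤ R / 16) (hS : ∀ j, IsSpike (e j) s ε d (S j)) (hb : ∀ j, ‖b j‖ = 1)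
    (hrot : ∀ j, ∀ t : ℝ, 0 ≤ t → t ≤ 1 →
      min (m + κ * t ^ 2) L ≤ ρ (f (e j) + w j (e j ^ 2 * (b j * t))))
    (hsep : ∀ i j, i ≠ j → ε * 2 ≤ ‖e i - e j‖) {δ r : ℝ} (hδR : δ ≤ R / 8) (hεr : ε ≤ 1 - r)
    (hr : r ≤ 1) (hdε : d < ε) (hε : IsPushTolerance X ρ f (fun j => f (e j)) w R δ ε) :
    IsSpikedDisc X ρ r δ m (min (m + κ * s ^ 2) L) R e d f
      (pushDisc f w fun j ζ => b j * S j ζ) := by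
  have hk (j : ι) : IsMultiplier fun ζ => b j * S j ζ := (hS j).isMultiplier.const_mul (hb j)
  have hfar (ζ : ℂ) (hζ : ‖ζ‖ ≤ 1) (j : ι) (hj : ε ≤ ‖ζ - e j‖) : ‖b j * S j ζ‖ ≤ ε := by
    simpa [hb] using (hS j).norm_le ζ hζ hj
  have hmodel (ζ : ℂ) (hζ : ‖ζ‖ ≤ 1) (j : ι) (hj : ‖ζ - e j‖ < ε) :=
    isPushModel_spike (f := f) he hS hb hsep hR.le hζ hj
  have hcard := hε.card_mul_lt
  refine ⟨hε.isDiscPerturbation hf hr hw hk (fun ζ hζ j => hfar ζ (hζ.trans hr) j ?_)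
    fun ζ hζ => ?_, fun ζ hζ j hj => ?_, fun ζ hζ hd => ?_⟩
  · have htri := norm_sub_norm_le (e j) ζ
    rw [he, norm_sub_rev] at htri
    linarith
  · by_cases! hnear : ∃ j, ‖ζ - e j‖ < ε
    · obtain ⟨j, hj⟩ := hnear
      refine Or.inr ⟨j, _, _, hmodel ζ hζ j hj, (min_le_right _ _).trans
        (le_trans ?_ (hrot j _ (norm_nonneg _) ((hS j).isMultiplier.norm_le_one ζ hζ)))⟩
      exact le_min (le_add_of_nonneg_right (by positivity)) hmL
    · exact Or.inl fun j => hfar ζ hζ j (hnear j)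
  · have hgain := hrot j _ (norm_nonneg _) ((hS j).isMultiplier.norm_le_one ζ hζ)
    have hpush := (hε.of_model _ hk j ζ _ _ hζ (hmodel ζ hζ j (hj.trans_lt hdε))).2
    have hheight : min (m + κ * s ^ 2) L ≤ min (m + κ * ‖S j ζ‖ ^ 2) L := by
      gcongr
      exact (hS j).le_norm ζ hζ hj
    linarith
  · by_cases! hnear : ∃ j, ‖ζ - e j‖ < ε
    · obtain ⟨j, hj⟩ := hnear
      have hpush := norm_pushDisc_sub_le_add (f := f) hw hk hζ hε.pos.le j
        (hmodel ζ hζ j hj).norm_le_of_ne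
      rw [norm_mul, hb, one_mul] at hpush
      linarith [(hS j).norm_le_two_mul ζ hζ (hd j)]
    · linarith [norm_pushDisc_sub_le (f := f) hw hk hζ fun j => hfar ζ hζ j (hnear j)]

theorem IsSpikedDisc.mono {r δ δ' a : ℝ} {g : ℂ → E} (hg : IsSpikedDisc X ρ r δ m a R e d f g)
    (hδ : δ ≤ δ') : IsSpikedDisc X ρ r δ' m a R e d f g :=
  ⟨hg.toIsDiscPerturbation.mono hδ le_rfl,
    fun ζ hζ i hi => by linarith [hg.lt_of_norm_sub_le ζ hζ i hi], hg.norm_sub_lt_of_le⟩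

theorem eventually_exists_isSpikedDisc [Finite ι] (hX : IsOpen X) (hρ : ContinuousOn ρ X)
    (hf : IsDisc X f) (hmL : m ≤ L) (hR : 0 < R) (hκ : 0 ≤ κ)
    (hfm : ∀ ζ : ℂ, ‖ζ‖ = 1 → m ≤ ρ (f ζ)) (he : ∀ j, ‖e j‖ = 1) (hinj : Function.Injective e)
    (hw : ∀ j, ∃ w, IsPushCurve X ρ L R κ (f (e j)) w) (hs : 0 < s) (hs1 : s < 1)
    (hsR : s ≤ R / 16) {δ r : ℝ} (hδ : 0 < δ) (hr : r < 1) :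
    ∀ᶠ d in 𝓝[>] 0, ∃ g, IsSpikedDisc X ρ r δ m (min (m + κ * s ^ 2) L) R e d f g := by
  have := Fintype.ofFinite ι
  choose w hw using hw
  choose b hb hrot using fun j => exists_spike_rotation hf hR (he j) (hfm _ (he j)) (hw j)
  obtain ⟨ε, hε, hsep, hεr⟩ := ((eventually_isPushTolerance hX hρ hf hR hw
    (lt_min hδ (by positivity : 0 < R / 8))).and
      ((eventually_forall_ne_two_mul_le_norm_sub hinj).and
        (Ioc_mem_nhdsGT (sub_pos.2 hr)))).exists
  filter_upwards [Filter.eventually_all.2 fun j => eventually_exists_isSpike (he j) hs hs1 hε.pos,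
    Ioo_mem_nhdsGT hε.pos] with d hS hd
  choose S hS using hS
  exact ⟨_, (isSpikedDisc_pushDisc hf hmL hR hκ he hw hs.le hsR hS hb hrot hsep (min_le_right _ _)
    hεr.2 hr.le hd.2 hε).mono (min_le_left _ _)⟩

end SpikedDisc

section CappedDisc

open scoped ComplexConjugate Topology

theorem eventually_forall_lt_norm_pow_imp {α : Type*} [TopologicalSpace α] {K : Set α}
    (hK : IsCompact K) {h : α → ℂ} (hcont : ContinuousOn h K) (hh : ∀ x ∈ K, ‖h x‖ ≤ 1)
    {P : α → Prop} (hP : ∀ x ∈ K, ‖h x‖ = 1 → ∀ᶠ y in 𝓝[K] x, P y) {ε : ℝ} (hε : 0 < ε) :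
    ∀ᶠ N : ℕ in Filter.atTop, ∀ x ∈ K, ε < ‖h x‖ ^ N → P x := by
  refine hK.induction_on (p := fun s => ∀ᶠ N : ℕ in Filter.atTop, ∀ x ∈ s, ε < ‖h x‖ ^ N → P x)
    (by simp) (fun s t hst ht => ht.mono fun N hN x hx => hN x (hst hx))
    (fun s t hs ht => (hs.and ht).mono fun N hN x hx => hx.elim (hN.1 x) (hN.2 x)) fun x hx => ?_
  rcases (hh x hx).lt_or_eq with hlt | heq
  · obtain ⟨a, hxa, ha⟩ := exists_between hlt
    refine ⟨_, (hcont x hx).norm.eventually_lt_const hxa, ?_⟩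
    filter_upwards [(tendsto_pow_atTop_nhds_zero_of_lt_one ((norm_nonneg _).trans hxa.le)
      ha).eventually_le_const hε] with N hN y hy hlt'
    exact absurd hlt' (not_lt.2 ((pow_le_pow_left₀ (norm_nonneg _) (le_of_lt hy) N).trans hN))
  · exact ⟨_, hP x hx heq, Filter.Eventually.of_forall fun N y hy _ => hy⟩

variable {ι : Type*} {c : ι → ℂ} {φ : ℝ} {h : ι → ℂ → ℂ} {ε : ℝ}

theorem exists_forall_lt_norm_pow_imp [Finite ι] (hh : ∀ j, IsCap (c j) φ (h j))
    (hdisj : Pairwise fun i j => Disjoint (closedArc (c i) φ) (closedArc (c j) φ)) (hε : 0 < ε)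
    {P : ι → ℂ → Prop}
    (hP : ∀ j, ∀ ζ ∈ closedArc (c j) φ, ∀ᶠ y in 𝓝[closedBall 0 1] ζ, P j y) :
    ∃ N : ℕ, ∀ j, ∀ ζ : ℂ, ‖ζ‖ ≤ 1 → ε < ‖h j ζ‖ ^ N →
      P j ζ ∧ ∀ i, i ≠ j → ‖h i ζ‖ ^ N ≤ ε := by
  have hle (j : ι) : ∀ ζ ∈ closedBall (0 : ℂ) 1, ‖h j ζ‖ ≤ 1 := fun ζ hζ =>
    (hh j).isMultiplier.norm_le_one ζ (by simpa using hζ)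
  have hlocal (j : ι) : ∀ ζ ∈ closedBall (0 : ℂ) 1, ‖h j ζ‖ = 1 →
      ∀ᶠ y in 𝓝[closedBall 0 1] ζ, P j y ∧ ∀ i, i ≠ j → ‖h i y‖ < ‖h j y‖ := fun ζ hζ h1 => by
    have harc := ((hh j).norm_eq_one_iff ζ (by simpa using hζ)).1 h1
    refine (hP j ζ harc).and (Filter.eventually_all.2 fun i => ?_)
    by_cases hij : i = j
    · simp [hij]
    · have hi : ‖h i ζ‖ < ‖h j ζ‖ := by
        rw [h1]
        refine (hle i ζ hζ).lt_of_ne fun heq => Set.disjoint_left.1 (hdisj hij) ?_ harc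
        exact ((hh i).norm_eq_one_iff ζ (by simpa using hζ)).1 heq
      filter_upwards [((hh i).isMultiplier.continuousOn ζ hζ).norm.eventually_lt
        ((hh j).isMultiplier.continuousOn ζ hζ).norm hi] with y hy _ using hy
  obtain ⟨N, hN⟩ := (Filter.eventually_all.2 fun j => eventually_forall_lt_norm_pow_imp
    (isCompact_closedBall (0 : ℂ) 1) (hh j).isMultiplier.continuousOn (hle j) (hlocal j) hε).exists
  refine ⟨N, fun j ζ hζ hj => ?_⟩
  rw [← mem_closedBall_zero_iff] at hζ
  obtain ⟨hPj, hlt⟩ := hN j ζ hζ hj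
  refine ⟨hPj, fun i hij => ?_⟩
  by_contra! hi
  exact (hlt i hij).not_gt ((hN i ζ hζ hi).2 j hij.symm)

theorem eventually_exists_arc_endpoint {c ζ : ℂ} (hζ : ζ ∈ closedArc c φ) (hε : 0 < ε) :
    ∀ᶠ y in 𝓝 ζ, (y * conj c).re ≤ Real.cos φ →
      ∃ p : ℂ, ‖p‖ = 1 ∧ (p * conj c).re = Real.cos φ ∧ ‖y - p‖ ≤ ε := by
  rcases hζ.2.lt_or_eq with hlt | heq
  · have hcont : Continuous fun y : ℂ => (y * conj c).re := by fun_prop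
    filter_upwards [hcont.continuousAt.eventually_const_lt hlt] with y hy hle
    exact absurd hle hy.not_ge
  · filter_upwards [closedBall_mem_nhds ζ hε] with y hy _
    exact ⟨ζ, hζ.1, heq.symm, by rwa [← dist_eq_norm]⟩

variable {E : Type*} [NormedAddCommGroup E] {X : Set E} {ρ : E → ℝ} {f : ℂ → E} {z : ι → E}
  {w : ι → ℂ → E} {b : ι → ℂ} {k : ι → ℂ → ℂ} {r m l L R κ δ : ℝ}

/-- Multipliers `k j` that are unimodular on disjoint arcs, and at most `ε` away from a
neighborhood of these arcs. On the rest of the unit circle, `k j` is a nonnegative multiple of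
`b j`, and at most `ε` except next to an endpoint of the arc. -/
structure IsCapFamily (ρ : E → ℝ) (f : ℂ → E) (z : ι → E) (c : ι → ℂ) (φ r m R : ℝ) (b : ι → ℂ)
    (ε : ℝ) (k : ι → ℂ → ℂ) : Prop where
  isMultiplier : ∀ j, IsMultiplier (k j)
  norm_eq_one : ∀ j, ∀ ζ ∈ closedArc (c j) φ, ‖k j ζ‖ = 1
  eq_mul_norm : ∀ j, ∀ ζ : ℂ, ‖ζ‖ = 1 → (ζ * conj (c j)).re ≤ Real.cos φ → k j ζ = b j * ‖k j ζ‖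
  norm_le_of_ne : ∀ j, ∀ ζ : ℂ, ‖ζ‖ ≤ 1 → ε < ‖k j ζ‖ → ∀ i, i ≠ j → ‖k i ζ‖ ≤ ε
  lt_norm : ∀ j, ∀ ζ : ℂ, ‖ζ‖ ≤ 1 → ε < ‖k j ζ‖ → r < ‖ζ‖
  lt_level : ∀ j, ∀ ζ : ℂ, ‖ζ‖ ≤ 1 → ε < ‖k j ζ‖ → m < ρ (f ζ)
  norm_sub_center_lt : ∀ j, ∀ ζ : ℂ, ‖ζ‖ ≤ 1 → ε < ‖k j ζ‖ → ‖f ζ - z j‖ < 3 * R / 4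
  exists_endpoint : ∀ j, ∀ ζ : ℂ, ‖ζ‖ ≤ 1 → ε < ‖k j ζ‖ → (ζ * conj (c j)).re ≤ Real.cos φ →
    ∃ p : ℂ, ‖p‖ = 1 ∧ (p * conj (c j)).re = Real.cos φ ∧ ‖ζ - p‖ ≤ ε

theorem IsCapFamily.isPushModel_self (hk : IsCapFamily ρ f z c φ r m R b ε k) (hε : 0 ≤ ε) {j : ι}
    {ζ : ℂ} (hζ : ‖ζ‖ ≤ 1) (hj : ε < ‖k j ζ‖) : IsPushModel f z k R ε j ζ ζ (k j ζ) where
  norm_le_of_ne := hk.norm_le_of_ne j ζ hζ hj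
  norm_base_le := hζ
  norm_amount_le := (hk.isMultiplier j).norm_le_one ζ hζ
  norm_sub_base_le := by simpa using hε
  norm_sub_amount_le := by simpa using hε
  norm_sub_center_le := (hk.norm_sub_center_lt j ζ hζ hj).le

variable [NormedSpace ℂ E]

theorem exists_isCapFamily [Finite ι] (hρ : ContinuousOn ρ X) (hf : IsDisc X f) (hr : r < 1)
    (hm : ∀ ζ : ℂ, ‖ζ‖ = 1 → m < ρ (f ζ)) (hh : ∀ j, IsCap (c j) φ (h j))
    (hdisj : Pairwise fun i j => Disjoint (closedArc (c i) φ) (closedArc (c j) φ))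
    (hclose : ∀ j, ∀ ζ ∈ closedArc (c j) φ, ‖f ζ - z j‖ < 3 * R / 4) (hb : ∀ j, ‖b j‖ = 1)
    (hε : 0 < ε) : ∃ k, IsCapFamily ρ f z c φ r m R b ε k := by
  have hlocal : ∀ j, ∀ ζ ∈ closedArc (c j) φ, ∀ᶠ y in 𝓝[closedBall 0 1] ζ, r < ‖y‖ ∧
      m < ρ (f y) ∧ ‖f y - z j‖ < 3 * R / 4 ∧ ((y * conj (c j)).re ≤ Real.cos φ →
        ∃ p : ℂ, ‖p‖ = 1 ∧ (p * conj (c j)).re = Real.cos φ ∧ ‖y - p‖ ≤ ε) := fun j ζ hζ => by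
    have hball : ζ ∈ closedBall (0 : ℂ) 1 := by simpa using hζ.1.le
    have hρf : ContinuousOn (fun y => ρ (f y)) (closedBall 0 1) :=
      hρ.comp hf.continuousOn fun y hy => hf.mem y (by simpa using hy)
    filter_upwards [continuous_norm.continuousWithinAt.eventually_const_lt (hr.trans_eq hζ.1.symm),
      (hρf ζ hball).eventually_const_lt (hm ζ hζ.1),
      ((hf.continuousOn ζ hball).sub_const (z j)).norm.eventually_lt_const (hclose j ζ hζ),
      mem_nhdsWithin_of_mem_nhds (eventually_exists_arc_endpoint hζ hε)] with y h1 h2 h3 h4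
    exact ⟨h1, h2, h3, h4⟩
  obtain ⟨N, hN⟩ := exists_forall_lt_norm_pow_imp hh hdisj hε hlocal
  have hnorm (j : ι) (ζ : ℂ) : ‖b j * h j ζ ^ N‖ = ‖h j ζ‖ ^ N := by
    rw [norm_mul, hb, one_mul, norm_pow]
  refine ⟨fun j ζ => b j * h j ζ ^ N, fun j => ((hh j).isMultiplier.pow N).const_mul (hb j),
    fun j ζ hζ => ?_, fun j ζ hζ hle => ?_, ?_, ?_, ?_, ?_, ?_⟩
  · rw [hnorm, ((hh j).norm_eq_one_iff ζ hζ.1.le).2 hζ, one_pow]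
  · rw [hnorm, Complex.ofReal_pow, ← (hh j).eq_norm ζ hζ hle]
  all_goals
    intro j ζ hζ hj
    simp only [hnorm] at hj ⊢
  · exact (hN j ζ hζ hj).2
  · exact (hN j ζ hζ hj).1.1
  · exact (hN j ζ hζ hj).1.2.1
  · exact (hN j ζ hζ hj).1.2.2.1
  · exact (hN j ζ hζ hj).1.2.2.2

theorem exists_cap_rotation (hf : IsDisc X f) {c : ℂ} (hc : ‖c‖ = 1) {z : E} {w : ℂ → E}
    (hw : IsPushCurve X ρ L R κ z w) (hclose : ∀ ζ ∈ closedArc c φ, ‖f ζ - z‖ < R) :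
    ∃ b : ℂ, ‖b‖ = 1 ∧ ∀ p : ℂ, ‖p‖ = 1 → (p * conj c).re = Real.cos φ → ∀ t : ℝ, 0 ≤ t → t ≤ 1 →
      min (ρ (f p) + κ * t ^ 2) L ≤ ρ (f p + w (p ^ 2 * (b * t))) := by
  set p : ℝ → ℂ := fun x => c * Complex.exp (x * Complex.I)
  have hp (x : ℝ) : ‖p x‖ = 1 := norm_mul_exp_ofReal_mul_I hc x
  have hmem (x : ℝ) : f (p x) ∈ X := hf.mem _ (hp x).le
  have harc (x : ℝ) (hx : Real.cos φ = Real.cos x) : ‖f (p x) - z‖ < R :=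
    hclose _ ⟨hp x, hx.trans_le (re_mul_exp_mul_conj hc x).ge⟩
  obtain ⟨b, hb, hrot⟩ := hw.exists_rotation (hmem φ) (harc φ rfl) (hmem (-φ))
    (harc (-φ) (Real.cos_neg φ).symm) (u := p φ ^ 2) (u' := p (-φ) ^ 2) (by simp [hp])
    (by simp [hp])
  refine ⟨b, hb, fun y hy hre t ht0 ht1 => ?_⟩
  rw [mul_left_comm]
  rcases eq_mul_exp_of_re_mul_conj_eq_cos hc hy hre with rfl | rfl
  · exact (hrot t ht0 ht1).1
  · exact (hrot t ht0 ht1).2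

namespace IsCapFamily

variable [Fintype ι]

theorem isDiscPerturbation (hk : IsCapFamily ρ f z c φ r m R b ε k) (hf : IsDisc X f)
    (hr : r ≤ 1) (hmL : m ≤ L) (hR : 0 < R) (hκ : 0 ≤ κ)
    (hw : ∀ j, IsPushCurve X ρ L R κ (z j) (w j)) (hε : IsPushTolerance X ρ f z w R δ ε) :
    IsDiscPerturbation X ρ r δ (m - 1 / 2) f (pushDisc f w k) := by
  refine hε.isDiscPerturbation hf hr hw hk.isMultiplier (fun ζ hζ j => ?_) fun ζ hζ => ?_
  · by_contra! hj
    exact (hk.lt_norm j ζ (hζ.trans hr) hj).not_ge hζ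
  · by_cases! hbig : ∃ j, ε < ‖k j ζ‖
    · obtain ⟨j, hj⟩ := hbig
      refine Or.inr ⟨j, ζ, _, hk.isPushModel_self hε.pos.le hζ hj, (min_le_right _ _).trans
        (le_trans (le_min ?_ (by linarith)) ((hw j).min_sub_half_le hκ (hf.mem ζ hζ) ?_
          ((norm_sq_mul_le hζ _).trans ((hk.isMultiplier j).norm_le_one ζ hζ))))⟩
      · linarith [hk.lt_level j ζ hζ hj]
      · linarith [hk.norm_sub_center_lt j ζ hζ hj]
    · exact Or.inl hbig

theorem min_sub_lt_of_norm_eq_one (hk : IsCapFamily ρ f z c φ r m R b ε k) (hf : IsDisc X f)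
    (hR : 0 < R) (hκ : 0 ≤ κ) (hw : ∀ j, IsPushCurve X ρ L R κ (z j) (w j))
    (hε : IsPushTolerance X ρ f z w R δ ε) (hε1 : ε < 1) (hb : ∀ j, ‖b j‖ = 1)
    (hrot : ∀ j, ∀ p : ℂ, ‖p‖ = 1 → (p * conj (c j)).re = Real.cos φ → ∀ t : ℝ, 0 ≤ t → t ≤ 1 →
      min (ρ (f p) + κ * t ^ 2) L ≤ ρ (f p + w j (p ^ 2 * (b j * t))))
    (hclose : ∀ j, ∀ ζ ∈ closedArc (c j) φ, ‖f ζ - z j‖ < 3 * R / 4)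
    (hl : ∀ ζ : ℂ, ‖ζ‖ = 1 → (∀ j, (ζ * conj (c j)).re ≤ Real.cos φ) → l ≤ ρ (f ζ))
    (hdisj : Pairwise fun i j => Disjoint (closedArc (c i) φ) (closedArc (c j) φ)) {ζ : ℂ}
    (hζ : ‖ζ‖ = 1) : min (min (m + κ) l) L - δ < ρ (pushDisc f w k ζ) := by
  by_cases! hbig : ∃ j, ε < ‖k j ζ‖
  · obtain ⟨j, hj⟩ := hbig
    rcases le_total (Real.cos φ) (ζ * conj (c j)).re with harc | harc
    · have hgain := (hw j).min_le_of_norm_eq_one (η := ζ ^ 2 * k j ζ) (hf.mem ζ hζ.le)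
        (by linarith [hk.norm_sub_center_lt j ζ hζ.le hj])
        (by rw [norm_mul, norm_pow, hζ, hk.norm_eq_one j ζ ⟨hζ, harc⟩, one_pow, one_mul])
      have hle : min (min (m + κ) l) L ≤ min (ρ (f ζ) + κ) L :=
        min_le_min_right _ ((min_le_left _ _).trans (by linarith [hk.lt_level j ζ hζ.le hj]))
      linarith [(hε.of_model k hk.isMultiplier j ζ _ _ hζ.le
        (hk.isPushModel_self hε.pos.le hζ.le hj)).2]
    · obtain ⟨p, hp, hpre, hζp⟩ := hk.exists_endpoint j ζ hζ.le hj harc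
      have hk1 := (hk.isMultiplier j).norm_le_one ζ hζ.le
      have hmodel : IsPushModel f z k R ε j ζ p (b j * ‖k j ζ‖) :=
        ⟨hk.norm_le_of_ne j ζ hζ.le hj, hp.le, by simpa [hb] using hk1, hζp,
          by rw [← hk.eq_mul_norm j ζ hζ harc, sub_self, norm_zero]; exact hε.pos.le,
          (hclose j p ⟨hp, hpre.ge⟩).le⟩
      have hlp : l ≤ ρ (f p) := hl p hp fun i => by
        by_contra! hi
        have hij : i ≠ j := by
          rintro rfl
          exact hi.ne' hpre
        exact Set.disjoint_left.1 (hdisj hij) ⟨hp, hi.le⟩ ⟨hp, hpre.ge⟩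
      have hle : min (min (m + κ) l) L ≤ min (ρ (f p) + κ * ‖k j ζ‖ ^ 2) L :=
        min_le_min_right _ ((min_le_right _ _).trans
          (hlp.trans (le_add_of_nonneg_right (by positivity))))
      linarith [(hε.of_model k hk.isMultiplier j ζ _ _ hζ.le hmodel).2,
        hrot j p hp hpre _ (norm_nonneg (k j ζ)) hk1]
  · have hlζ : l ≤ ρ (f ζ) := hl ζ hζ fun j => by
      by_contra! hj
      linarith [hk.norm_eq_one j ζ ⟨hζ, hj.le⟩, hbig j]
    linarith [(hε.of_small k hk.isMultiplier ζ hζ.le hbig).2, min_le_left (min (m + κ) l) L,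
      min_le_right (m + κ) l]

end IsCapFamily

theorem exists_capped_disc [Finite ι] (hX : IsOpen X) (hρ : ContinuousOn ρ X) (hf : IsDisc X f)
    (hmL : m ≤ L) (hR : 0 < R) (hκ : 0 ≤ κ) (hφ0 : 0 < φ) (hφπ : φ < Real.pi)
    (hc : ∀ j, ‖c j‖ = 1)
    (hdisj : Pairwise fun i j => Disjoint (closedArc (c i) φ) (closedArc (c j) φ))
    (hw : ∀ j, ∃ w, IsPushCurve X ρ L R κ (z j) w)
    (hclose : ∀ j, ∀ ζ ∈ closedArc (c j) φ, ‖f ζ - z j‖ < 3 * R / 4)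
    (hl : ∀ ζ : ℂ, ‖ζ‖ = 1 → (∀ j, (ζ * conj (c j)).re ≤ Real.cos φ) → l ≤ ρ (f ζ))
    (hm : ∀ ζ : ℂ, ‖ζ‖ = 1 → m < ρ (f ζ)) (hδ : 0 < δ) (hr : r < 1) :
    ∃ g, IsDiscPerturbation X ρ r δ (m - 1 / 2) f g ∧
      ∀ ζ : ℂ, ‖ζ‖ = 1 → min (min (m + κ) l) L - δ < ρ (g ζ) := by
  have := Fintype.ofFinite ι
  choose w hw using hw
  choose h hh using fun j => exists_isCap (hc j) hφ0 hφπ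
  choose b hb hrot using fun j => exists_cap_rotation hf (hc j) (hw j) fun ζ hζ =>
    (hclose j ζ hζ).trans (by linarith)
  obtain ⟨ε, hε, -, hε1⟩ := ((eventually_isPushTolerance hX hρ hf hR hw hδ).and
    (Ioo_mem_nhdsGT one_pos)).exists
  obtain ⟨k, hk⟩ := exists_isCapFamily hρ hf hr hm hh hdisj hclose hb hε.pos
  exact ⟨_, hk.isDiscPerturbation hf hr.le hmL hR hκ hw hε, fun ζ hζ =>
    hk.min_sub_lt_of_norm_eq_one hf hR hκ hw hε hε1 hb hrot hclose hl hdisj hζ⟩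

end CappedDisc

section CircleSubdivision

open AddCircle
open scoped ComplexConjugate Topology

variable {T : ℝ}

theorem re_toCircle_mul_conj (x y : AddCircle T) :
    ((toCircle x : ℂ) * conj (toCircle y : ℂ)).re = Real.cos (2 * Real.pi / T * ‖x - y‖) := by
  rw [← Circle.coe_inv_eq_conj, ← toCircle_neg, ← Circle.coe_mul, ← toCircle_add, ← sub_eq_add_neg]
  induction x - y using QuotientAddGroup.induction_on with | H t =>
  rw [toCircle_apply_mk, Circle.coe_exp, Complex.exp_ofReal_mul_I_re]
  rcases eq_or_ne T 0 with rfl | hT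
  · simp
  · have hred : 2 * Real.pi / T * (t - round (T⁻¹ * t) * T) =
        2 * Real.pi / T * t - round (T⁻¹ * t) * (2 * Real.pi) := by field_simp
    rw [AddCircle.norm_eq]
    rcases abs_choice (t - round (T⁻¹ * t) * T) with h | h
    · rw [h, hred, Real.cos_sub_int_mul_two_pi]
    · rw [h, mul_neg, Real.cos_neg, hred, Real.cos_sub_int_mul_two_pi]

theorem norm_mem_Icc_zero_half (hT : 0 < T) (x : AddCircle T) : ‖x‖ ∈ Set.Icc 0 (T / 2) :=
  ⟨norm_nonneg x, by simpa [abs_of_pos hT] using norm_le_half_period (x := x) T hT.ne'⟩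

theorem pi_div_mul_mem_Icc (hT : 0 < T) {a : ℝ} (ha : a ∈ Set.Icc 0 (T / 2)) :
    Real.pi / T * a ∈ Set.Icc (0 : ℝ) (Real.pi / 2) := by
  have := Real.pi_pos
  refine ⟨mul_nonneg (by positivity) ha.1, ?_⟩
  calc Real.pi / T * a ≤ Real.pi / T * (T / 2) := by gcongr; exact ha.2
    _ = Real.pi / 2 := by field_simp

theorem norm_toCircle_sub (hT : 0 < T) (x y : AddCircle T) :
    ‖(toCircle x : ℂ) - toCircle y‖ = 2 * Real.sin (Real.pi / T * ‖x - y‖) := by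
  obtain ⟨h0, h1⟩ := pi_div_mul_mem_Icc hT (norm_mem_Icc_zero_half hT (x - y))
  have hsin := Real.sin_nonneg_of_nonneg_of_le_pi h0 (by linarith [Real.pi_pos])
  have hre := re_toCircle_mul_conj x y
  rw [show 2 * Real.pi / T * ‖x - y‖ = 2 * (Real.pi / T * ‖x - y‖) by ring, Real.cos_two_mul,
    Real.cos_sq'] at hre
  refine (sq_eq_sq₀ (norm_nonneg _) (by positivity)).1 ?_
  rw [← Complex.normSq_eq_norm_sq, Complex.normSq_sub, Circle.normSq_coe, Circle.normSq_coe, hre]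
  ring

theorem strictMonoOn_two_mul_sin_pi_div_mul (hT : 0 < T) :
    StrictMonoOn (fun a => 2 * Real.sin (Real.pi / T * a)) (Set.Icc 0 (T / 2)) := by
  intro a ha b hb hab
  have := Real.pi_pos
  have ha' := pi_div_mul_mem_Icc hT ha
  have hb' := pi_div_mul_mem_Icc hT hb
  exact mul_lt_mul_of_pos_left (Real.strictMonoOn_sin ⟨by linarith [ha'.1], ha'.2⟩
    ⟨by linarith [hb'.1], hb'.2⟩ (by gcongr)) two_pos

theorem strictAntiOn_cos_two_pi_div_mul (hT : 0 < T) :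
    StrictAntiOn (fun a => Real.cos (2 * Real.pi / T * a)) (Set.Icc 0 (T / 2)) := by
  intro a ha b hb hab
  have := Real.pi_pos
  have ha' := pi_div_mul_mem_Icc hT ha
  have hb' := pi_div_mul_mem_Icc hT hb
  refine Real.strictAntiOn_cos ?_ ?_ (by gcongr) <;> rw [mul_div_assoc, mul_assoc]
  · exact ⟨by linarith [ha'.1], by linarith [ha'.2]⟩
  · exact ⟨by linarith [hb'.1], by linarith [hb'.2]⟩

theorem toCircle_mem_closedArc_iff (hT : 0 < T) {a : ℝ} (ha : a ∈ Set.Icc 0 (T / 2))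
    {x y : AddCircle T} :
    (toCircle x : ℂ) ∈ closedArc (toCircle y : ℂ) (2 * Real.pi / T * a) ↔ ‖x - y‖ ≤ a := by
  rw [closedArc, Set.mem_ofPred_eq, re_toCircle_mul_conj,
    (strictAntiOn_cos_two_pi_div_mul hT).le_iff_ge ha (norm_mem_Icc_zero_half hT _),
    Circle.norm_coe, eq_self, true_and]

variable {J : ℕ}

/-- The starting points of the arcs `[j, j + 1]`, for `j < J`, of a circle of length `J`. -/
noncomputable def arcEndpoint (j : Fin J) : AddCircle (J : ℝ) := ((j : ℕ) : ℝ)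

/-- The midpoints of the arcs `[j, j + 1]`, for `j < J`, of a circle of length `J`. -/
noncomputable def arcCenter (j : Fin J) : AddCircle (J : ℝ) := ((j : ℕ) + 1 / 2 : ℝ)

theorem exists_arcEndpoint_eq_intCast (hJ : 0 < J) (n : ℤ) :
    ∃ j : Fin J, arcEndpoint j = ((n : ℝ) : AddCircle (J : ℝ)) := by
  have h0 : 0 ≤ n % J := Int.emod_nonneg _ (by omega)
  have hlt : n % J < J := Int.emod_lt_of_pos _ (by omega)
  refine ⟨⟨(n % J).toNat, by omega⟩, ?_⟩
  rw [arcEndpoint, ← sub_eq_zero, ← AddCircle.coe_sub, coe_eq_zero_iff]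
  refine ⟨-(n / J), ?_⟩
  have hdiv : -(n / J) * (J : ℤ) = (n % J).toNat - n := by
    rw [Int.toNat_of_nonneg h0]
    linarith [Int.emod_add_mul_ediv n J]
  rw [zsmul_eq_mul]
  exact_mod_cast hdiv

theorem arcEndpoint_injective : Function.Injective (arcEndpoint (J := J)) := fun i j hij => by
  have : Fact (0 < (J : ℝ)) := ⟨by exact_mod_cast i.pos⟩
  have hmem (k : Fin J) : ((k : ℕ) : ℝ) ∈ Set.Ico (0 : ℝ) (0 + J) := by simp
  exact Fin.ext (by exact_mod_cast (coe_eq_coe_iff_of_mem_Ico (hmem i) (hmem j)).1 hij)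

theorem one_le_norm_intCast {n : ℤ} (hn : ((n : ℝ) : AddCircle (J : ℝ)) ≠ 0) :
    1 ≤ ‖((n : ℝ) : AddCircle (J : ℝ))‖ := by
  rw [← norm_ne_zero_iff] at hn
  rw [AddCircle.norm_eq] at hn ⊢
  norm_cast at hn ⊢
  exact Int.one_le_abs (abs_ne_zero.1 hn)

theorem half_le_norm_intCast_add_half (n : ℤ) :
    1 / 2 ≤ ‖((n + 1 / 2 : ℝ) : AddCircle (J : ℝ))‖ := by
  rw [AddCircle.norm_eq]
  set k : ℤ := n - round ((J : ℝ)⁻¹ * (n + 1 / 2)) * J with hk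
  have hcast : (n + 1 / 2 : ℝ) - round ((J : ℝ)⁻¹ * (n + 1 / 2)) * J = k + 1 / 2 := by
    rw [hk]
    push_cast
    ring
  rw [hcast]
  rcases le_or_gt 0 k with h | h
  · have : (0 : ℝ) ≤ k := by exact_mod_cast h
    exact le_abs.2 (Or.inl (by linarith))
  · have : (k : ℝ) ≤ -1 := by exact_mod_cast Int.le_sub_one_of_lt h
    exact le_abs.2 (Or.inr (by linarith))

/-- Arcs with centers `c j` which cover the unit circle up to points at distance at most `d` from
the points `e j`, are pairwise disjoint, and lie close to `e j` but not too close to any `e i`. -/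
structure IsCapSubdivision {ι : Type*} (e c : ι → ℂ) (x d φ : ℝ) : Prop where
  pos : 0 < φ
  lt_pi : φ < Real.pi
  exists_norm_sub_le : ∀ ζ : ℂ, ‖ζ‖ = 1 → (∀ j, (ζ * conj (c j)).re ≤ Real.cos φ) →
    ∃ i, ‖ζ - e i‖ ≤ d
  pairwise_disjoint : Pairwise fun i j => Disjoint (closedArc (c i) φ) (closedArc (c j) φ)
  norm_sub_lt : ∀ j, ∀ ζ ∈ closedArc (c j) φ, ‖ζ - e j‖ < x
  le_norm_sub : ∀ j, ∀ ζ ∈ closedArc (c j) φ, ∀ i, d ≤ ‖ζ - e i‖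

theorem exists_norm_sub_arcEndpoint_le (hJ : 0 < J) {a : ℝ} {x : AddCircle (J : ℝ)}
    (hx : ∀ j : Fin J, 1 / 2 - a ≤ ‖x - arcCenter j‖) :
    ∃ i : Fin J, ‖x - arcEndpoint i‖ ≤ a := by
  induction x using QuotientAddGroup.induction_on with | H t =>
  have hle (s : ℝ) : ‖(s : AddCircle (J : ℝ))‖ ≤ |s| := QuotientAddGroup.norm_mk_le_norm
  have hnear (n : ℤ) (hn : |t - n| ≤ a) :
      ∃ i : Fin J, ‖(t : AddCircle (J : ℝ)) - arcEndpoint i‖ ≤ a := by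
    obtain ⟨i, hi⟩ := exists_arcEndpoint_eq_intCast hJ n
    exact ⟨i, by rw [hi, ← AddCircle.coe_sub]; exact (hle _).trans hn⟩
  obtain ⟨j, hj⟩ := exists_arcEndpoint_eq_intCast hJ ⌊t⌋
  have hcenter : 1 / 2 - a ≤ |t - (⌊t⌋ + 1 / 2)| := by
    have h := hx j
    rw [arcCenter, AddCircle.coe_add, ← arcEndpoint, hj, ← AddCircle.coe_add] at h
    exact h.trans (hle _)
  rcases le_abs.1 hcenter with h | h
  · refine hnear (⌊t⌋ + 1) ?_
    push_cast
    exact abs_le.2 ⟨by linarith, by linarith [Int.lt_floor_add_one t]⟩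
  · exact hnear ⌊t⌋ (abs_le.2 ⟨by linarith [Int.floor_le t], by linarith⟩)

theorem le_norm_sub_arcEndpoint {a : ℝ} {x : AddCircle (J : ℝ)} {j : Fin J}
    (hx : ‖x - arcCenter j‖ ≤ 1 / 2 - a) (i : Fin J) : a ≤ ‖x - arcEndpoint i‖ := by
  have hhalf := half_le_norm_intCast_add_half (J := J) ((j : ℤ) - i)
  have htri := norm_sub_le_norm_sub_add_norm_sub (arcCenter j) x (arcEndpoint i)
  rw [norm_sub_rev _ x, arcCenter, arcEndpoint, ← AddCircle.coe_sub, ← arcCenter, ← arcEndpoint,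
    add_sub_right_comm] at htri
  push_cast at hhalf
  linarith

theorem norm_sub_arcEndpoint_lt_one {a : ℝ} (ha : 0 < a) {x : AddCircle (J : ℝ)} {j : Fin J}
    (hx : ‖x - arcCenter j‖ ≤ 1 / 2 - a) :
    ‖x - arcEndpoint j‖ < 1 := by
  have hle : ‖((1 / 2 : ℝ) : AddCircle (J : ℝ))‖ ≤ |1 / 2| := QuotientAddGroup.norm_mk_le_norm
  rw [abs_of_pos one_half_pos] at hle
  rw [arcCenter, AddCircle.coe_add, ← arcEndpoint, ← sub_sub] at hx
  linarith [norm_sub_norm_le (x - arcEndpoint j) ((1 / 2 : ℝ) : AddCircle (J : ℝ))]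

theorem eq_of_norm_sub_arcCenter_le {a : ℝ} (ha : 0 < a) {x : AddCircle (J : ℝ)} {i j : Fin J}
    (hi : ‖x - arcCenter i‖ ≤ 1 / 2 - a) (hj : ‖x - arcCenter j‖ ≤ 1 / 2 - a) : i = j := by
  have htri := norm_sub_le_norm_sub_add_norm_sub (arcCenter i) x (arcCenter j)
  have hcenter : arcCenter i - arcCenter j = arcEndpoint i - arcEndpoint j := by
    simp only [arcCenter, arcEndpoint, AddCircle.coe_add, add_sub_add_right_eq_sub]
  by_contra hij
  have hne : ((((i : ℤ) - (j : ℤ) : ℤ) : ℝ) : AddCircle (J : ℝ)) =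
      arcEndpoint i - arcEndpoint j := by
    push_cast
    rw [AddCircle.coe_sub, arcEndpoint, arcEndpoint]
  have hone := one_le_norm_intCast (hne.trans_ne (sub_ne_zero.2 (arcEndpoint_injective.ne hij)))
  rw [hne, ← hcenter] at hone
  rw [norm_sub_rev _ x] at htri
  linarith

theorem exists_coe_toCircle_eq (hT : T ≠ 0) {ζ : ℂ} (hζ : ‖ζ‖ = 1) :
    ∃ x : AddCircle T, (toCircle x : ℂ) = ζ := by
  obtain ⟨x, hx⟩ := (homeomorphCircle hT).surjective ⟨ζ, mem_sphere_zero_iff_norm.2 hζ⟩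
  exact ⟨x, by rw [← homeomorphCircle_apply hT, hx]⟩

theorem isCapSubdivision_toCircle (hJ : 0 < J) {x a : ℝ} (hx : 2 * Real.pi / J ≤ x) (ha0 : 0 < a)
    (ha : a < 1 / 2) :
    IsCapSubdivision (fun j : Fin J => (toCircle (arcEndpoint j) : ℂ))
      (fun j => (toCircle (arcCenter j) : ℂ)) x (2 * Real.sin (Real.pi / J * a))
      (2 * Real.pi / J * (1 / 2 - a)) := by
  have hπ := Real.pi_pos
  have hJ1 : (1 : ℝ) ≤ J := by exact_mod_cast hJ
  have hJr : (0 : ℝ) < J := by linarith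
  have hmem : 1 / 2 - a ∈ Set.Icc 0 ((J : ℝ) / 2) := ⟨by linarith, by linarith⟩
  have harc (j : Fin J) (ζ : ℂ) (hζ : ζ ∈ closedArc (toCircle (arcCenter j) : ℂ)
      (2 * Real.pi / J * (1 / 2 - a))) :
      ∃ y : AddCircle (J : ℝ), (toCircle y : ℂ) = ζ ∧ ‖y - arcCenter j‖ ≤ 1 / 2 - a := by
    obtain ⟨y, rfl⟩ := exists_coe_toCircle_eq hJr.ne' hζ.1
    exact ⟨y, rfl, (toCircle_mem_closedArc_iff hJr hmem).1 hζ⟩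
  refine ⟨mul_pos (by positivity) (by linarith), ?_, fun ζ hζ h => ?_, fun i j hij => ?_,
    fun j ζ hζ => ?_, fun j ζ hζ i => ?_⟩
  · calc 2 * Real.pi / J * (1 / 2 - a) ≤ 2 * Real.pi * (1 / 2 - a) := by
          gcongr
          exact div_le_self (by positivity) hJ1
      _ < Real.pi := by nlinarith
  · obtain ⟨y, rfl⟩ := exists_coe_toCircle_eq hJr.ne' hζ
    simp only [re_toCircle_mul_conj] at h
    obtain ⟨i, hi⟩ := exists_norm_sub_arcEndpoint_le hJ fun j =>
      ((strictAntiOn_cos_two_pi_div_mul hJr).le_iff_ge (norm_mem_Icc_zero_half hJr _) hmem).1 (h j)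
    refine ⟨i, (norm_toCircle_sub hJr _ _).trans_le ?_⟩
    exact (strictMonoOn_two_mul_sin_pi_div_mul hJr).monotoneOn (norm_mem_Icc_zero_half hJr _)
      ⟨ha0.le, by linarith⟩ hi
  · refine Set.disjoint_left.2 fun ζ hi hj => hij ?_
    obtain ⟨y, rfl, hy⟩ := harc i ζ hi
    exact eq_of_norm_sub_arcCenter_le ha0 hy ((toCircle_mem_closedArc_iff hJr hmem).1 hj)
  · obtain ⟨y, rfl, hy⟩ := harc j ζ hζ
    calc ‖(toCircle y : ℂ) - toCircle (arcEndpoint j)‖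
        ≤ 2 * (Real.pi / J * ‖y - arcEndpoint j‖) := by
          rw [norm_toCircle_sub hJr]
          gcongr
          exact Real.sin_le (by positivity)
      _ < 2 * (Real.pi / J * 1) := by
          gcongr
          exact norm_sub_arcEndpoint_lt_one ha0 hy
      _ ≤ x := by rwa [mul_one, ← mul_div_assoc]
  · obtain ⟨y, rfl, hy⟩ := harc j ζ hζ
    rw [norm_toCircle_sub hJr]
    exact (strictMonoOn_two_mul_sin_pi_div_mul hJr).monotoneOn ⟨ha0.le, by linarith⟩
      (norm_mem_Icc_zero_half hJr _) (le_norm_sub_arcEndpoint hy i)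

theorem exists_isCapSubdivision {x : ℝ} (hx : 0 < x) :
    ∃ (J : ℕ) (e c : Fin J → ℂ), (∀ j, ‖e j‖ = 1) ∧ (∀ j, ‖c j‖ = 1) ∧ Function.Injective e ∧
      ∃ᶠ d in 𝓝[>] 0, ∃ φ, IsCapSubdivision e c x d φ := by
  obtain ⟨J, hJx⟩ := exists_nat_gt (2 * Real.pi / x)
  have hπ := Real.pi_pos
  have hJr : (0 : ℝ) < J := lt_trans (by positivity) hJx
  have hJ1 : (1 : ℝ) ≤ J := by exact_mod_cast hJr
  have hpos : ∀ᶠ a in 𝓝[>] (0 : ℝ), 2 * Real.sin (Real.pi / J * a) ∈ Set.Ioi 0 := by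
    filter_upwards [Ioo_mem_nhdsGT one_half_pos] with a ha
    simpa using strictMonoOn_two_mul_sin_pi_div_mul hJr ⟨le_rfl, by positivity⟩
      ⟨ha.1.le, by linarith [ha.2]⟩ ha.1
  have htendsto : Filter.Tendsto (fun a => 2 * Real.sin (Real.pi / J * a)) (𝓝[>] 0) (𝓝[>] 0) :=
    tendsto_nhdsWithin_of_tendsto_nhds_of_eventually_within _
      (((by fun_prop : Continuous fun a => 2 * Real.sin (Real.pi / J * a)).tendsto' 0 0
        (by simp)).mono_left nhdsWithin_le_nhds) hpos
  refine ⟨J, fun j => toCircle (arcEndpoint j), fun j => toCircle (arcCenter j),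
    fun j => Circle.norm_coe _, fun j => Circle.norm_coe _,
    Subtype.val_injective.comp ((injective_toCircle hJr.ne').comp arcEndpoint_injective),
    htendsto.frequently (Filter.Eventually.frequently ?_)⟩
  filter_upwards [Ioo_mem_nhdsGT one_half_pos] with a ha
  refine ⟨_, isCapSubdivision_toCircle (by exact_mod_cast hJr) ?_ ha.1 ha.2⟩
  rw [div_le_iff₀ hJr]
  rw [div_lt_iff₀ hx] at hJx
  linarith

end CircleSubdivision

section RaisedDisc

variable {E : Type*} [NormedAddCommGroup E] [NormedSpace ℂ E] {X : Set E} {ρ : E → ℝ} {f : ℂ → E}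
  {m L R κ s δ r : ℝ}

theorem IsSpikedDisc.exists_isDiscPerturbation {ι : Type*} [Finite ι] {e c : ι → ℂ}
    {g : ℂ → E} {a x d φ : ℝ} (hg : IsSpikedDisc X ρ r δ m a R e d f g) (hX : IsOpen X)
    (hρ : ContinuousOn ρ X) (hmL : m ≤ L) (hR : 0 < R) (hκ : 0 ≤ κ) (he : ∀ j, ‖e j‖ = 1)
    (hc : ∀ j, ‖c j‖ = 1) (hsub : IsCapSubdivision e c x d φ)
    (hfx : ∀ ζ : ℂ, ‖ζ‖ = 1 → ∀ η : ℂ, ‖η‖ = 1 → ‖ζ - η‖ < x → ‖f ζ - f η‖ < R / 2)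
    (hw : ∀ j, ∃ w, IsPushCurve X ρ L R κ (f (e j)) w)
    (hm : ∀ ζ : ℂ, ‖ζ‖ = 1 → m < ρ (f ζ)) (hδ : 0 < δ) (hr : r < 1) :
    ∃ u, IsDiscPerturbation X ρ r δ (m - δ - 1 / 2) g u ∧
      ∀ ζ : ℂ, ‖ζ‖ = 1 → min (min (m - δ + κ) (a - δ)) L - δ < ρ (u ζ) := by
  have hclose (j : ι) (ζ : ℂ) (hζ : ζ ∈ closedArc (c j) φ) : ‖g ζ - f (e j)‖ < 3 * R / 4 := by
    linarith [norm_sub_le_norm_sub_add_norm_sub (g ζ) (f ζ) (f (e j)),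
      hg.norm_sub_lt_of_le ζ hζ.1.le (hsub.le_norm_sub j ζ hζ),
      hfx ζ hζ.1 (e j) (he j) (hsub.norm_sub_lt j ζ hζ)]
  refine exists_capped_disc hX hρ hg.isDisc (by linarith) hR hκ hsub.pos hsub.lt_pi hc
    hsub.pairwise_disjoint hw hclose (fun ζ hζ h => ?_) (fun ζ hζ => ?_) hδ hr
  · obtain ⟨i, hi⟩ := hsub.exists_norm_sub_le ζ hζ h
    exact (hg.lt_of_norm_sub_le ζ hζ.le i hi).le
  · have := hg.min_sub_lt ζ hζ.le
    rwa [min_eq_right (hm ζ hζ).le] at this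

theorem exists_raised_disc_step (hX : IsOpen X) (hρ : ContinuousOn ρ X)
    (hf : IsDisc X f) (hmL : m ≤ L) (hR : 0 < R) (hκ : 0 ≤ κ)
    (hpush : ∀ z₀ ∈ X, m ≤ ρ z₀ → ∃ w, IsPushCurve X ρ L R κ z₀ w) (hs : 0 < s) (hs1 : s < 1)
    (hsR : s ≤ R / 16) (hm : ∀ ζ : ℂ, ‖ζ‖ = 1 → m < ρ (f ζ)) (hδ : 0 < δ) (hδ1 : δ ≤ 1)
    (hr : r < 1) :
    ∃ g, IsDiscPerturbation X ρ r δ (m - 1) f g ∧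
      ∀ ζ : ℂ, ‖ζ‖ = 1 → min (m + κ * s ^ 2) L - δ < ρ (g ζ) := by
  obtain ⟨x, hx, hunif⟩ := Metric.uniformContinuousOn_iff.1
    ((isCompact_closedBall _ _).uniformContinuousOn_of_continuous hf.continuousOn) (R / 2)
    (half_pos hR)
  simp only [mem_closedBall_zero_iff, dist_eq_norm] at hunif
  obtain ⟨J, e, c, he, hc, hinj, hfreq⟩ := exists_isCapSubdivision hx
  have hw (j : Fin J) := hpush (f (e j)) (hf.mem _ (he j).le) (hm _ (he j)).le
  obtain ⟨d, ⟨φ, hsub⟩, g₁, hg₁⟩ := (hfreq.and_eventually (eventually_exists_isSpikedDisc hX hρ hf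
    hmL hR hκ (fun ζ hζ => (hm ζ hζ).le) he hinj hw hs hs1 hsR (half_pos hδ) hr)).exists
  obtain ⟨g, hg, hgc⟩ := hg₁.exists_isDiscPerturbation hX hρ hmL hR hκ he hc hsub
    (fun ζ hζ η hη => hunif ζ hζ.le η hη.le) hw hm (half_pos hδ) hr
  refine ⟨g, ?_, fun ζ hζ => ?_⟩
  · exact ((hg.mono le_rfl (by linarith)).trans
      (hg₁.toIsDiscPerturbation.mono le_rfl (by linarith)) (by linarith)).mono (by linarith) le_rfl
  · have hκs : κ * s ^ 2 ≤ κ := mul_le_of_le_one_right hκ (pow_le_one₀ hs.le hs1.le)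
    have hle : min (m + κ * s ^ 2) L - δ / 2 ≤
        min (min (m - δ / 2 + κ) (min (m + κ * s ^ 2) L - δ / 2)) L :=
      le_min (le_min (by linarith [min_le_left (m + κ * s ^ 2) L]) le_rfl)
        (by linarith [min_le_right (m + κ * s ^ 2) L])
    linarith [hgc ζ hζ]

theorem exists_iterated_raised_disc (hX : IsOpen X) (hρ : ContinuousOn ρ X)
    (hf : IsDisc X f) (hmL : m ≤ L) (hR : 0 < R) (hκ : 0 < κ)
    (hpush : ∀ z₀ ∈ X, m ≤ ρ z₀ → ∃ w, IsPushCurve X ρ (L + 1) R κ z₀ w) (hs : 0 < s)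
    (hs1 : s < 1) (hsR : s ≤ R / 16) (hm : ∀ ζ : ℂ, ‖ζ‖ = 1 → m < ρ (f ζ)) (hr : r < 1) (k : ℕ)
    (hδ : 0 < δ) :
    ∃ g, IsDiscPerturbation X ρ r δ (m - 1) f g ∧
      ∀ ζ : ℂ, ‖ζ‖ = 1 → min (m + k * (κ * s ^ 2 / 2)) L < ρ (g ζ) := by
  induction k generalizing δ with
  | zero =>
    exact ⟨f, .refl hf hδ, fun ζ hζ => by simpa [min_eq_left hmL] using hm ζ hζ⟩
  | succ k ih =>
    obtain ⟨g₁, hg₁, hg₁c⟩ := ih (half_pos hδ)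
    have hγ : 0 < κ * s ^ 2 := by positivity
    set a := min (m + k * (κ * s ^ 2 / 2)) L with ha
    have hma : m ≤ a := le_min (le_add_of_nonneg_right (by positivity)) hmL
    have haL : a ≤ L := min_le_right _ _
    obtain ⟨g, hg, hgc⟩ := exists_raised_disc_step hX hρ hg₁.isDisc (by linarith) hR hκ.le
      (fun z hz hmz => hpush z hz (hma.trans hmz)) hs hs1 hsR hg₁c
      (by positivity : 0 < min (δ / 2) (min 1 (κ * s ^ 2 / 2)))
      ((min_le_right _ _).trans (min_le_left _ _)) hr
    have hτ : min (δ / 2) (min 1 (κ * s ^ 2 / 2)) ≤ min 1 (κ * s ^ 2 / 2) := min_le_right _ _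
    refine ⟨g, ((hg.mono (min_le_left _ _) (by linarith)).trans hg₁ (by linarith)).mono
      (by linarith) le_rfl, fun ζ hζ => lt_of_le_of_lt ?_ (hgc ζ hζ)⟩
    calc min (m + (k + 1 : ℕ) * (κ * s ^ 2 / 2)) L ≤ min (a + κ * s ^ 2 / 2) L := by
          refine le_min ?_ (min_le_right _ _)
          rw [ha, ← min_add_add_right]
          push_cast
          exact min_le_min (by linarith) (by linarith)
      _ ≤ min (a + κ * s ^ 2) (L + 1) - min 1 (κ * s ^ 2 / 2) := by
          rw [← min_sub_sub_right]
          exact min_le_min (by linarith [min_le_right 1 (κ * s ^ 2 / 2)])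
            (by linarith [min_le_left 1 (κ * s ^ 2 / 2)])
      _ ≤ _ := by linarith

theorem exists_raised_disc (hX : IsOpen X) (hρ : ContDiffOn ℝ 2 ρ X)
    (hexh : ∀ c : ℝ, IsCompact {z ∈ X | ρ z ≤ c}) {M : ℝ}
    (hLevi : ∀ z ∈ X, M < ρ z → HasTwoPositiveLeviEigenvalues ρ z) (hMm : M < m) (hmL : m ≤ L)
    (hf : IsDisc X f) (hm : ∀ ζ : ℂ, ‖ζ‖ = 1 → m < ρ (f ζ)) (hδ : 0 < δ) (hr : r < 1) :
    ∃ g, IsDiscPerturbation X ρ r δ (m - 1) f g ∧ ∀ ζ : ℂ, ‖ζ‖ = 1 → L < ρ (g ζ) := by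
  obtain ⟨R, hR, κ, hκ, hpush⟩ := exists_isPushCurve_of_exhaustion hX hρ hexh hLevi hMm (L + 1)
  obtain ⟨s, hs, hs1, hsR⟩ : ∃ s > 0, s < 1 ∧ s ≤ R / 16 :=
    ⟨min (1 / 2) (R / 16), by positivity, (min_le_left _ _).trans_lt (by norm_num),
      min_le_right _ _⟩
  obtain ⟨k, hk⟩ := exists_nat_ge ((L - m) / (κ * s ^ 2 / 2))
  rw [div_le_iff₀ (by positivity)] at hk
  obtain ⟨g, hg, hgc⟩ := exists_iterated_raised_disc hX hρ.continuousOn hf hmL hR hκ hpush hs hs1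
    hsR hm hr k hδ
  rw [min_eq_right (by linarith)] at hgc
  exact ⟨g, hg, hgc⟩

end RaisedDisc

section LimitDisc

open scoped Topology

variable {E : Type*} [NormedAddCommGroup E] {F : ℕ → ℂ → E} {g : ℂ → E} {r δ : ℕ → ℝ}

theorem le_div_two_pow_of_succ_le_half (hδ : ∀ k, δ (k + 1) ≤ δ k / 2) (k i : ℕ) :
    δ (k + i) ≤ δ k / 2 ^ i := by
  induction i with
  | zero => simp
  | succ i ih =>
    calc δ (k + (i + 1)) ≤ δ (k + i) / 2 := hδ _
      _ ≤ δ k / 2 ^ i / 2 := by gcongr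
      _ = δ k / 2 ^ (i + 1) := by rw [pow_succ, div_div]

theorem dist_succ_le_geometric (hr : Monotone r) (hδ : ∀ k, δ (k + 1) ≤ δ k / 2)
    (hF : ∀ k, ∀ ζ : ℂ, ‖ζ‖ ≤ r k → ‖F (k + 1) ζ - F k ζ‖ ≤ δ k) {k : ℕ} {ζ : ℂ} (hζ : ‖ζ‖ ≤ r k)
    (i : ℕ) : dist (F (k + i) ζ) (F (k + (i + 1)) ζ) ≤ 2 * δ k / 2 / 2 ^ i := by
  rw [dist_comm, dist_eq_norm, mul_div_cancel_left₀ _ two_ne_zero]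
  exact (hF _ ζ (hζ.trans (hr (Nat.le_add_right k i)))).trans
    (le_div_two_pow_of_succ_le_half hδ k i)

theorem exists_forall_tendsto_of_succ_le_half [CompleteSpace E] (hr : Monotone r)
    (hδ : ∀ k, δ (k + 1) ≤ δ k / 2)
    (hF : ∀ k, ∀ ζ : ℂ, ‖ζ‖ ≤ r k → ‖F (k + 1) ζ - F k ζ‖ ≤ δ k) :
    ∃ g : ℂ → E, ∀ k, ∀ ζ : ℂ, ‖ζ‖ ≤ r k → Filter.Tendsto (F · ζ) Filter.atTop (𝓝 (g ζ)) := by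
  have hconv (ζ : ℂ) : ∃ a, ∀ k, ‖ζ‖ ≤ r k → Filter.Tendsto (F · ζ) Filter.atTop (𝓝 a) := by
    by_cases hζ : ∃ k, ‖ζ‖ ≤ r k
    · obtain ⟨k, hk⟩ := hζ
      obtain ⟨a, ha⟩ := cauchySeq_tendsto_of_complete
        (cauchySeq_of_le_geometric_two (dist_succ_le_geometric hr hδ hF hk))
      refine ⟨a, fun _ _ => (Filter.tendsto_add_atTop_iff_nat k).1 ?_⟩
      simpa only [add_comm] using ha
    · exact ⟨0, fun k hk => absurd ⟨k, hk⟩ hζ⟩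
  choose g hg using hconv
  exact ⟨g, fun k ζ => hg ζ k⟩

theorem norm_sub_le_of_tendsto_of_succ_le_half (hr : Monotone r) (hδ : ∀ k, δ (k + 1) ≤ δ k / 2)
    (hF : ∀ k, ∀ ζ : ℂ, ‖ζ‖ ≤ r k → ‖F (k + 1) ζ - F k ζ‖ ≤ δ k) {k : ℕ} {ζ : ℂ} (hζ : ‖ζ‖ ≤ r k)
    {a : E} (ha : Filter.Tendsto (F · ζ) Filter.atTop (𝓝 a)) : ‖a - F k ζ‖ ≤ 2 * δ k := by
  rw [← Filter.tendsto_add_atTop_iff_nat k] at ha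
  simp only [add_comm _ k] at ha
  rw [← dist_eq_norm, dist_comm]
  exact dist_le_of_le_geometric_two_of_tendsto₀ (dist_succ_le_geometric hr hδ hF hζ) ha

theorem tendsto_zero_of_succ_le_half (hδ0 : ∀ k, 0 ≤ δ k) (hδ : ∀ k, δ (k + 1) ≤ δ k / 2) :
    Filter.Tendsto δ Filter.atTop (𝓝 0) := by
  refine squeeze_zero hδ0 (g := fun k => δ 0 / 2 ^ k) (fun k => ?_)
    (tendsto_const_nhds.div_atTop (tendsto_pow_atTop_atTop_of_one_lt one_lt_two))
  simpa using le_div_two_pow_of_succ_le_half hδ 0 k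

theorem tendstoLocallyUniformlyOn_of_norm_sub_le (hr : Monotone r)
    (hr1 : ∀ ζ : ℂ, ‖ζ‖ < 1 → ∃ k, ‖ζ‖ < r k) (hδ : Filter.Tendsto δ Filter.atTop (𝓝 0))
    (hgF : ∀ k, ∀ ζ : ℂ, ‖ζ‖ ≤ r k → ‖g ζ - F k ζ‖ ≤ δ k) :
    TendstoLocallyUniformlyOn F g Filter.atTop (ball 0 1) := by
  rw [Metric.tendstoLocallyUniformlyOn_iff]
  intro ε hε ζ hζ
  obtain ⟨k, hk⟩ := hr1 ζ (mem_ball_zero_iff.1 hζ)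
  refine ⟨ball 0 (r k), mem_nhdsWithin_of_mem_nhds (isOpen_ball.mem_nhds (by simpa using hk)), ?_⟩
  filter_upwards [hδ.eventually_lt_const hε, Filter.eventually_ge_atTop k] with N hN hkN y hy
  rw [dist_eq_norm]
  exact (hgF N y ((mem_ball_zero_iff.1 hy).le.trans (hr hkN))).trans_lt hN

theorem exists_limit_disc [NormedSpace ℂ E] [CompleteSpace E] (hr : Monotone r)
    (hr1 : ∀ ζ : ℂ, ‖ζ‖ < 1 → ∃ k, ‖ζ‖ < r k) (hδ0 : ∀ k, 0 ≤ δ k)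
    (hδ : ∀ k, δ (k + 1) ≤ δ k / 2) (hFd : ∀ k, DifferentiableOn ℂ (F k) (ball 0 1))
    (hF : ∀ k, ∀ ζ : ℂ, ‖ζ‖ ≤ r k → ‖F (k + 1) ζ - F k ζ‖ ≤ δ k) :
    ∃ g : ℂ → E, DifferentiableOn ℂ g (ball 0 1) ∧
      (∀ k, ∀ ζ : ℂ, ‖ζ‖ ≤ r k → ‖g ζ - F k ζ‖ ≤ 2 * δ k) ∧
      Filter.Tendsto (F · 0) Filter.atTop (𝓝 (g 0)) ∧
      Filter.Tendsto (fun k => deriv (F k) 0) Filter.atTop (𝓝 (deriv g 0)) := by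
  obtain ⟨g, hg⟩ := exists_forall_tendsto_of_succ_le_half hr hδ hF
  have hgF (k : ℕ) (ζ : ℂ) (hζ : ‖ζ‖ ≤ r k) : ‖g ζ - F k ζ‖ ≤ 2 * δ k :=
    norm_sub_le_of_tendsto_of_succ_le_half hr hδ hF hζ (hg k ζ hζ)
  have hδ2 : Filter.Tendsto (fun k => 2 * δ k) Filter.atTop (𝓝 0) := by
    simpa using (tendsto_zero_of_succ_le_half hδ0 hδ).const_mul 2
  have hunif := tendstoLocallyUniformlyOn_of_norm_sub_le hr hr1 hδ2 hgF
  have hFd' := Filter.Eventually.of_forall (f := Filter.atTop) hFd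
  exact ⟨g, hunif.differentiableOn hFd' isOpen_ball, hgF, hunif.tendsto_at (mem_ball_self one_pos),
    (hunif.deriv hFd' isOpen_ball).tendsto_at (mem_ball_self one_pos)⟩

end LimitDisc

section DiscStage

variable {E : Type*} [NormedAddCommGroup E] [NormedSpace ℂ E] {X : Set E} {ρ : E → ℝ} {f : ℂ → E}
  {m r₁ : ℝ}

theorem exists_lt_one_forall_le_norm_lt (hρ : ContinuousOn ρ X) (hf : IsDisc X f)
    (hm : ∀ ζ : ℂ, ‖ζ‖ = 1 → m < ρ (f ζ)) :
    ∃ r < 1, ∀ ζ : ℂ, r ≤ ‖ζ‖ → ‖ζ‖ ≤ 1 → m < ρ (f ζ) := by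
  have hmaps : Set.MapsTo f (closedBall 0 1) X := fun ζ hζ => hf.mem ζ (by simpa using hζ)
  have hcompact : IsCompact (closedBall (0 : ℂ) 1 ∩ (ρ ∘ f) ⁻¹' Set.Iic m) :=
    (isCompact_closedBall (0 : ℂ) 1).of_isClosed_subset ((hρ.comp hf.continuousOn
      hmaps).preimage_isClosed_of_isClosed isClosed_closedBall isClosed_Iic) Set.inter_subset_left
  obtain ⟨q, hq1, hq⟩ : ∃ q < 1, ∀ ζ ∈ closedBall (0 : ℂ) 1 ∩ (ρ ∘ f) ⁻¹' Set.Iic m, ‖ζ‖ ≤ q := by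
    rcases Set.eq_empty_or_nonempty (closedBall (0 : ℂ) 1 ∩ (ρ ∘ f) ⁻¹' Set.Iic m) with h | hne
    · exact ⟨0, one_pos, by simp [h]⟩
    · obtain ⟨ζ₀, hζ₀, hmax⟩ := hcompact.exists_isMaxOn hne continuous_norm.continuousOn
      refine ⟨‖ζ₀‖, lt_of_le_of_ne (by simpa using hζ₀.1) fun h => ?_, hmax⟩
      exact (hm ζ₀ h).not_ge hζ₀.2
  obtain ⟨r, hqr, hr1⟩ := exists_between hq1
  refine ⟨r, hr1, fun ζ hrζ hζ => ?_⟩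
  by_contra! hle
  linarith [hq ζ ⟨by simpa using hζ, hle⟩]

/-- The data of one stage of the construction of a proper disc: a disc, the radius up to which
later discs stay close to it, and a margin for their distance from it. -/
structure DiscStage (E : Type*) where
  disc : ℂ → E
  radius : ℝ
  margin : ℝ

/-- The disc of the stage `p` lies above level `m` outside the radius of `p`, which is at least
`r₁`, and its perturbations by less than four margins stay in `X` and move `ρ` by less than `1`. -/
structure IsDiscStage (X : Set E) (ρ : E → ℝ) (m r₁ : ℝ) (p : DiscStage E) : Prop where
  isDisc : IsDisc X p.disc
  le_radius : r₁ ≤ p.radius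
  radius_lt_one : p.radius < 1
  lt_of_radius_le : ∀ ζ : ℂ, p.radius ≤ ‖ζ‖ → ‖ζ‖ ≤ 1 → m < ρ (p.disc ζ)
  margin_pos : 0 < p.margin
  margin_le_one : p.margin ≤ 1
  mem_and_dist_lt : ∀ ζ : ℂ, ‖ζ‖ ≤ 1 → ∀ y, dist y (p.disc ζ) < 4 * p.margin →
    y ∈ X ∧ dist (ρ y) (ρ (p.disc ζ)) < 1

theorem IsDiscStage.mono {p : DiscStage E} {r₂ : ℝ} (hp : IsDiscStage X ρ m r₁ p) (hr : r₂ ≤ r₁) :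
    IsDiscStage X ρ m r₂ p :=
  { hp with le_radius := hr.trans hp.le_radius }

theorem exists_isDiscStage (hX : IsOpen X) (hρ : ContinuousOn ρ X) (hf : IsDisc X f)
    (hm : ∀ ζ : ℂ, ‖ζ‖ = 1 → m < ρ (f ζ)) (hr₁ : r₁ < 1) {δ : ℝ} (hδ : 0 < δ) :
    ∃ p, IsDiscStage X ρ m r₁ p ∧ p.disc = f ∧ p.margin ≤ δ := by
  obtain ⟨r, hr1, hlevel⟩ := exists_lt_one_forall_le_norm_lt hρ hf hm
  obtain ⟨η, hη, hmargin⟩ := exists_pos_forall_dist_lt_mem_and_dist_lt hX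
    ((isCompact_closedBall (0 : ℂ) 1).image_of_continuousOn hf.continuousOn)
    (Set.image_subset_iff.2 fun ζ hζ => hf.mem ζ (by simpa using hζ)) hρ one_pos
  refine ⟨⟨f, max r₁ r, min (η / 4) (min 1 δ)⟩, ⟨hf, le_max_left _ _, max_lt hr₁ hr1,
    fun ζ hζ => hlevel ζ ((le_max_right _ _).trans hζ), by positivity,
    (min_le_right _ _).trans (min_le_left _ _), fun ζ hζ y hy => ?_⟩, rfl,
    (min_le_right _ _).trans (min_le_right _ _)⟩
  refine hmargin _ ⟨ζ, by simpa using hζ, rfl⟩ y (hy.trans_le ?_)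
  linarith [min_le_left (η / 4) (min 1 δ)]

/-- The stage `q` may follow the stage `p` of level `m`: its disc perturbs that of `p` by less than
the margin of `p` within the radius of `p`, and the margins at least halve. -/
structure IsRefinement (X : Set E) (ρ : E → ℝ) (m : ℝ) (p q : DiscStage E) : Prop where
  radius_le : p.radius ≤ q.radius
  margin_le : q.margin ≤ p.margin / 2
  isDiscPerturbation : IsDiscPerturbation X ρ p.radius p.margin (m - 1) p.disc q.disc

theorem IsDiscStage.exists_isRefinement (hX : IsOpen X) (hρ : ContDiffOn ℝ 2 ρ X)
    (hexh : ∀ c : ℝ, IsCompact {z ∈ X | ρ z ≤ c}) {M : ℝ}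
    (hLevi : ∀ z ∈ X, M < ρ z → HasTwoPositiveLeviEigenvalues ρ z) (hMm : M < m)
    {p : DiscStage E} (hp : IsDiscStage X ρ m r₁ p) {r₂ : ℝ} (hr₂ : r₂ < 1) :
    ∃ q, IsDiscStage X ρ (m + 1) r₂ q ∧ IsRefinement X ρ m p q := by
  obtain ⟨g, hg, hgm⟩ := exists_raised_disc hX hρ hexh hLevi hMm (by linarith : m ≤ m + 1) hp.isDisc
    (fun ζ hζ => hp.lt_of_radius_le ζ (hζ ▸ hp.radius_lt_one.le) hζ.le) hp.margin_pos
    hp.radius_lt_one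
  obtain ⟨q, hq, rfl, hqδ⟩ := exists_isDiscStage hX hρ.continuousOn hg.isDisc hgm
    (max_lt hp.radius_lt_one hr₂) (half_pos hp.margin_pos)
  exact ⟨q, hq.mono (le_max_right _ _), (le_max_left _ _).trans hq.le_radius, hqδ, hg⟩

theorem exists_seq_of_forall_exists_succ {α : Type*} {Q : ℕ → α → Prop} {S : ℕ → α → α → Prop}
    {a₀ : α} (h₀ : Q 0 a₀) (h : ∀ k a, Q k a → ∃ b, Q (k + 1) b ∧ S k a b) :
    ∃ u : ℕ → α, u 0 = a₀ ∧ (∀ k, Q k (u k)) ∧ ∀ k, S k (u k) (u (k + 1)) := by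
  have : Nonempty α := ⟨a₀⟩
  choose! next hQ hS using h
  have hu (k : ℕ) : Q k (Nat.rec a₀ next k) := by
    induction k with
    | zero => exact h₀
    | succ k ih => exact hQ k _ ih
  exact ⟨fun k => Nat.rec a₀ next k, rfl, hu, fun k => hS k _ (hu k)⟩

/-- A sequence of successive refinements whose levels tend to infinity and whose radii tend to
one. -/
structure IsRefiningSequence (X : Set E) (ρ : E → ℝ) (m : ℝ) (u : ℕ → DiscStage E) : Prop where
  isDiscStage : ∀ k : ℕ, IsDiscStage X ρ (m + k) (1 - 1 / ((k : ℝ) + 1)) (u k)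
  isRefinement : ∀ k : ℕ, IsRefinement X ρ (m + k) (u k) (u (k + 1))

theorem exists_isRefiningSequence (hX : IsOpen X) (hρ : ContDiffOn ℝ 2 ρ X)
    (hexh : ∀ c : ℝ, IsCompact {z ∈ X | ρ z ≤ c}) {M : ℝ}
    (hLevi : ∀ z ∈ X, M < ρ z → HasTwoPositiveLeviEigenvalues ρ z) (hMm : M < m)
    {p : DiscStage E} (hp : IsDiscStage X ρ m 0 p) :
    ∃ u, u 0 = p ∧ IsRefiningSequence X ρ m u := by
  obtain ⟨u, hu0, hstage, href⟩ := exists_seq_of_forall_exists_succ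
    (Q := fun k : ℕ => IsDiscStage X ρ (m + k) (1 - 1 / ((k : ℝ) + 1)))
    (S := fun k : ℕ => IsRefinement X ρ (m + k)) (a₀ := p) (by simpa using hp) fun k q hq => by
      rw [Nat.cast_succ, ← add_assoc]
      exact hq.exists_isRefinement hX hρ hexh hLevi (by linarith [k.cast_nonneg (α := ℝ)])
        (sub_lt_self _ (by positivity))
  exact ⟨u, hu0, hstage, href⟩

namespace IsRefiningSequence

variable {u : ℕ → DiscStage E} {g : ℂ → E}

theorem monotone_radius (hu : IsRefiningSequence X ρ m u) : Monotone fun k => (u k).radius :=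
  monotone_nat_of_le_succ fun k => (hu.isRefinement k).radius_le

theorem exists_lt_radius (hu : IsRefiningSequence X ρ m u) {t : ℝ} (ht : t < 1) :
    ∃ k, t < (u k).radius := by
  obtain ⟨k, hk⟩ := exists_nat_one_div_lt (sub_pos.2 ht)
  exact ⟨k, by linarith [(hu.isDiscStage k).le_radius]⟩

theorem disc_zero_and_deriv_zero (hu : IsRefiningSequence X ρ m u) (k : ℕ) :
    (u k).disc 0 = (u 0).disc 0 ∧ deriv (u k).disc 0 = deriv (u 0).disc 0 := by
  induction k with
  | zero => exact ⟨rfl, rfl⟩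
  | succ k ih =>
    have h := (hu.isRefinement k).isDiscPerturbation
    exact ⟨h.map_zero.trans ih.1, h.deriv_zero.trans ih.2⟩

theorem exists_limit [CompleteSpace E] (hu : IsRefiningSequence X ρ m u) :
    ∃ g : ℂ → E, DifferentiableOn ℂ g (ball 0 1) ∧
      (∀ k, ∀ ζ : ℂ, ‖ζ‖ ≤ (u k).radius → ‖g ζ - (u k).disc ζ‖ ≤ 2 * (u k).margin) ∧
      g 0 = (u 0).disc 0 ∧ deriv g 0 = deriv (u 0).disc 0 := by
  obtain ⟨g, hg, hgu, hg0, hgd⟩ := exists_limit_disc (F := fun k => (u k).disc) hu.monotone_radius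
    (fun ζ => hu.exists_lt_radius) (fun k => (hu.isDiscStage k).margin_pos.le)
    (fun k => (hu.isRefinement k).margin_le) (fun k => (hu.isDiscStage k).isDisc.differentiableOn)
    fun k ζ hζ => ((hu.isRefinement k).isDiscPerturbation.norm_sub_lt ζ hζ).le
  exact ⟨g, hg, hgu,
    tendsto_nhds_unique hg0 (by simp only [(hu.disc_zero_and_deriv_zero _).1, tendsto_const_nhds]),
    tendsto_nhds_unique hgd (by simp only [(hu.disc_zero_and_deriv_zero _).2, tendsto_const_nhds])⟩

theorem mem_and_dist_lt (hu : IsRefiningSequence X ρ m u)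
    (hgu : ∀ k, ∀ ζ : ℂ, ‖ζ‖ ≤ (u k).radius → ‖g ζ - (u k).disc ζ‖ ≤ 2 * (u k).margin) {k : ℕ}
    {ζ : ℂ} (hζ : ‖ζ‖ ≤ (u k).radius) :
    g ζ ∈ X ∧ dist (ρ (g ζ)) (ρ ((u k).disc ζ)) < 1 := by
  have hk := hu.isDiscStage k
  refine hk.mem_and_dist_lt ζ (hζ.trans hk.radius_lt_one.le) _ ?_
  rw [dist_eq_norm]
  linarith [hgu k ζ hζ, hk.margin_pos]

theorem mem (hu : IsRefiningSequence X ρ m u)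
    (hgu : ∀ k, ∀ ζ : ℂ, ‖ζ‖ ≤ (u k).radius → ‖g ζ - (u k).disc ζ‖ ≤ 2 * (u k).margin) {ζ : ℂ}
    (hζ : ‖ζ‖ < 1) : g ζ ∈ X := by
  obtain ⟨k, hk⟩ := hu.exists_lt_radius hζ
  exact (hu.mem_and_dist_lt hgu hk.le).1

-- Between the radii of the stages `j` and `j + 1` the disc of stage `j + 1` has height at least
-- `m + j - 2`: raising it costs `1`, and so at most does the tolerance.
theorem lt_of_radius_lt (hu : IsRefiningSequence X ρ m u)
    (hgu : ∀ k, ∀ ζ : ℂ, ‖ζ‖ ≤ (u k).radius → ‖g ζ - (u k).disc ζ‖ ≤ 2 * (u k).margin) {k : ℕ}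
    {ζ : ℂ} (hkζ : (u k).radius < ‖ζ‖) (hζ : ‖ζ‖ < 1) : m + k - 3 < ρ (g ζ) := by
  classical
  have hex : ∃ n, ‖ζ‖ ≤ (u n).radius := (hu.exists_lt_radius hζ).imp fun _ h => h.le
  have hkn : k < Nat.find hex := (Nat.lt_find_iff hex k).2 fun i hi =>
    ((hu.monotone_radius hi).trans_lt hkζ).not_ge
  obtain ⟨j, hj⟩ := Nat.exists_eq_succ_of_ne_zero (Nat.ne_zero_of_lt hkn)
  have hjζ : (u j).radius < ‖ζ‖ := not_le.1 (Nat.find_min hex (by omega))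
  have hstage := hu.isDiscStage j
  have hlevel := hstage.lt_of_radius_le ζ hjζ.le hζ.le
  have hnext := (hu.isRefinement j).isDiscPerturbation.min_sub_lt ζ hζ.le
  rw [min_eq_right (by linarith)] at hnext
  have hlimit := (abs_lt.1 (hu.mem_and_dist_lt hgu (hj ▸ Nat.find_spec hex)).2).1
  have hkj : (k : ℝ) ≤ j := by exact_mod_cast (by omega : k ≤ j)
  linarith [hstage.margin_le_one]

theorem isCompact_preimage (hu : IsRefiningSequence X ρ m u) (hρ : ContinuousOn ρ X)
    (hg : ContinuousOn g (ball 0 1))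
    (hgu : ∀ k, ∀ ζ : ℂ, ‖ζ‖ ≤ (u k).radius → ‖g ζ - (u k).disc ζ‖ ≤ 2 * (u k).margin) {K : Set E}
    (hKX : K ⊆ X) (hK : IsCompact K) : IsCompact {ζ ∈ ball (0 : ℂ) 1 | g ζ ∈ K} := by
  obtain ⟨C, hC⟩ := (hK.image_of_continuousOn (hρ.mono hKX)).bddAbove
  obtain ⟨k, hk⟩ := exists_nat_ge (C - m + 3)
  have hsub : {ζ ∈ ball (0 : ℂ) 1 | g ζ ∈ K} = closedBall 0 (u k).radius ∩ g ⁻¹' K := by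
    ext ζ
    simp only [Set.mem_ofPred_eq, Set.mem_inter_iff, Set.mem_preimage, mem_ball_zero_iff,
      mem_closedBall_zero_iff, and_congr_left_iff]
    refine fun hζK => ⟨fun hζ => ?_, fun hζ => hζ.trans_lt (hu.isDiscStage k).radius_lt_one⟩
    by_contra! hlt
    linarith [hu.lt_of_radius_lt hgu hlt hζ, hC ⟨g ζ, hζK, rfl⟩]
  have hgk : ContinuousOn g (closedBall 0 (u k).radius) :=
    hg.mono (closedBall_subset_ball (hu.isDiscStage k).radius_lt_one)
  rw [hsub]
  exact (isCompact_closedBall _ _).of_isClosed_subset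
    (hgk.preimage_isClosed_of_isClosed isClosed_closedBall hK.isClosed) Set.inter_subset_left

end IsRefiningSequence

end DiscStage

section ProperDisc

open scoped Topology

variable {E : Type*} [NormedAddCommGroup E] [NormedSpace ℂ E] {X : Set E} {ρ : E → ℝ} {f : ℂ → E}
  {M : ℝ}

theorem IsDisc.exists_gt_forall_lt (hf : IsDisc X f) (hρ : ContinuousOn ρ X)
    (hM : ∀ ζ : ℂ, ‖ζ‖ = 1 → M < ρ (f ζ)) : ∃ m > M, ∀ ζ : ℂ, ‖ζ‖ = 1 → m < ρ (f ζ) := by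
  obtain ⟨ζ₀, hζ₀, hmin⟩ := (isCompact_sphere (0 : ℂ) 1).exists_isMinOn ⟨1, by simp⟩
    (hρ.comp (hf.continuousOn.mono sphere_subset_closedBall)
      fun ζ hζ => hf.mem ζ (mem_sphere_zero_iff_norm.1 hζ).le)
  obtain ⟨m, hMm, hm⟩ := exists_between (hM ζ₀ (mem_sphere_zero_iff_norm.1 hζ₀))
  exact ⟨m, hMm, fun ζ hζ => hm.trans_le (hmin (mem_sphere_zero_iff_norm.2 hζ))⟩

theorem finiteDimensional_of_exhaustion (hX : IsOpen X) (hρ : ContinuousOn ρ X)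
    (hexh : ∀ c : ℝ, IsCompact {z ∈ X | ρ z ≤ c}) {z : E} (hz : z ∈ X) :
    FiniteDimensional ℂ E := by
  have hXz := hX.mem_nhds hz
  have hnhds : {w ∈ X | ρ w ≤ ρ z + 1} ∈ 𝓝 z :=
    Filter.inter_mem hXz ((hρ.continuousAt hXz).eventually_le_const (lt_add_one _))
  obtain ⟨r, hr, hball⟩ := Metric.nhds_basis_closedBall.mem_iff.1 hnhds
  exact .of_isCompact_closedBall ℂ hr ((hexh _).of_isClosed_subset isClosed_closedBall hball)

theorem exists_proper_disc (hX : IsOpen X) (hρ : ContDiffOn ℝ 2 ρ X)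
    (hexh : ∀ c : ℝ, IsCompact {z ∈ X | ρ z ≤ c})
    (hLevi : ∀ z ∈ X, M < ρ z → HasTwoPositiveLeviEigenvalues ρ z) (hf : IsDisc X f)
    (hM : ∀ ζ : ℂ, ‖ζ‖ = 1 → M < ρ (f ζ)) {r η : ℝ} (hr : r < 1) (hη : 0 < η) :
    ∃ g : ℂ → E, DifferentiableOn ℂ g (ball 0 1) ∧ (∀ ζ ∈ ball (0 : ℂ) 1, g ζ ∈ X) ∧
      (∀ K ⊆ X, IsCompact K → IsCompact {ζ ∈ ball (0 : ℂ) 1 | g ζ ∈ K}) ∧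
      (∀ ζ : ℂ, ‖ζ‖ ≤ r → dist (g ζ) (f ζ) < η) ∧ g 0 = f 0 ∧ deriv g 0 = deriv f 0 := by
  have := finiteDimensional_of_exhaustion hX hρ.continuousOn hexh (hf.mem 0 (by simp))
  have := FiniteDimensional.complete ℂ E
  obtain ⟨m, hMm, hm⟩ := hf.exists_gt_forall_lt hρ.continuousOn hM
  obtain ⟨p, hp, rfl, hpη⟩ := exists_isDiscStage hX hρ.continuousOn hf hm (max_lt hr one_pos)
    (by positivity : 0 < η / 3)
  obtain ⟨u, rfl, hu⟩ := exists_isRefiningSequence hX hρ hexh hLevi hMm (hp.mono (le_max_right _ _))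
  obtain ⟨g, hg, hgu, hg0, hgd⟩ := hu.exists_limit
  refine ⟨g, hg, fun ζ hζ => hu.mem hgu (mem_ball_zero_iff.1 hζ), fun K hKX hK =>
    hu.isCompact_preimage hρ.continuousOn hg.continuousOn hgu hKX hK, fun ζ hζ => ?_, hg0, hgd⟩
  rw [dist_eq_norm]
  linarith [hgu 0 ζ (hζ.trans ((le_max_left _ _).trans hp.le_radius))]

theorem exists_pos_forall_dist_lt_imp_lt {α : Type*} [PseudoMetricSpace α] {X K : Set α}
    (hK : IsCompact K) (hKX : K ⊆ X) {d : α → α → ℝ} (hd_symm : ∀ x ∈ X, ∀ y ∈ X, d x y = d y x)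
    (hd_tri : ∀ x ∈ X, ∀ y ∈ X, ∀ z ∈ X, d x z ≤ d x y + d y z)
    (hd_top : ∀ x ∈ X, ∀ ε > (0 : ℝ), ∃ δ > (0 : ℝ), ∀ y ∈ X, dist x y < δ → d x y < ε)
    {ε : ℝ} (hε : 0 < ε) :
    ∃ η > 0, ∀ x ∈ K, ∀ y, dist y x < η → y ∈ X → d y x < ε := by
  have hlocal (x : α) (hx : x ∈ K) :
      ∀ᶠ p in 𝓝 (x, x), p.1 ∈ X → p.2 ∈ X → d p.2 p.1 < ε := by
    obtain ⟨δ, hδ, hxδ⟩ := hd_top x (hKX hx) (ε / 2) (half_pos hε)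
    filter_upwards [prod_mem_nhds (ball_mem_nhds x hδ) (ball_mem_nhds x hδ)] with p hp hp₁ hp₂
    calc d p.2 p.1 ≤ d p.2 x + d x p.1 := hd_tri _ hp₂ x (hKX hx) _ hp₁
      _ = d x p.2 + d x p.1 := by rw [hd_symm _ hp₂ x (hKX hx)]
      _ < ε := by
        linarith [hxδ _ hp₁ (mem_ball'.1 hp.1), hxδ _ hp₂ (mem_ball'.1 hp.2)]
  obtain ⟨η, hη, h⟩ := exists_pos_forall_dist_lt_of_isCompact
    (P := fun x y => x ∈ X → y ∈ X → d y x < ε) hK hlocal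
  exact ⟨η, hη, fun x hx y hy => h x hx y hy (hKX hx)⟩

theorem proper_disc_approximation_general (hX : IsOpen X)
    (hρ : ContDiffOn ℝ 2 ρ X) (hexh : ∀ c : ℝ, IsCompact {z ∈ X | ρ z ≤ c})
    (hLevi : ∀ z ∈ X, M < ρ z → HasTwoPositiveLeviEigenvalues ρ z) {d : E → E → ℝ}
    (hd_symm : ∀ x ∈ X, ∀ y ∈ X, d x y = d y x)
    (hd_tri : ∀ x ∈ X, ∀ y ∈ X, ∀ z ∈ X, d x z ≤ d x y + d y z)
    (hd_top : ∀ x ∈ X, ∀ ε > (0 : ℝ), ∃ δ > (0 : ℝ), ∀ y ∈ X, dist x y < δ → d x y < ε)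
    {ε r : ℝ} (hε : 0 < ε) (hr : r < 1) (hf : IsDisc X f)
    (hM : ∀ ζ ∈ sphere (0 : ℂ) 1, M < ρ (f ζ)) :
    ∃ g : ℂ → E, DifferentiableOn ℂ g (ball 0 1) ∧ (∀ ζ ∈ ball (0 : ℂ) 1, g ζ ∈ X) ∧
      (∀ K ⊆ X, IsCompact K → IsCompact {ζ ∈ ball (0 : ℂ) 1 | g ζ ∈ K}) ∧
      (∀ ζ ∈ ball (0 : ℂ) r, d (g ζ) (f ζ) < ε) ∧ g 0 = f 0 ∧ deriv g 0 = deriv f 0 := by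
  obtain ⟨η, hη, hηd⟩ := exists_pos_forall_dist_lt_imp_lt
    ((isCompact_closedBall (0 : ℂ) 1).image_of_continuousOn hf.continuousOn)
    (Set.image_subset_iff.2 fun ζ hζ => hf.mem ζ (by simpa using hζ)) hd_symm hd_tri hd_top hε
  obtain ⟨g, hg, hgX, hproper, hclose, hg0, hgd⟩ := exists_proper_disc hX hρ hexh hLevi hf
    (fun ζ hζ => hM ζ (mem_sphere_zero_iff_norm.2 hζ)) hr hη
  refine ⟨g, hg, hgX, hproper, fun ζ hζ => ?_, hg0, hgd⟩
  have hζ1 : ζ ∈ ball (0 : ℂ) 1 := ball_subset_ball hr.le hζ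
  exact hηd _ ⟨ζ, ball_subset_closedBall hζ1, rfl⟩ _ (hclose ζ (mem_ball_zero_iff.1 hζ).le)
    (hgX ζ hζ1)

end ProperDisc

/-- Paper's Theorem 2 for domains in `ℂⁿ`: a continuous disc, holomorphic
inside, with boundary above level `M` of the exhaustion function (whose Levi form has at
least 2 positive eigenvalues on `{ρ > M}`) can be replaced by a proper holomorphic disc,
close to the original on `{|ζ| < r}` with respect to a given complete metric `d` on `X`
inducing the subspace topology, with the same center and proportional derivative there. -/
theorem proper_disc_approximation
    (n : ℕ) (hn : 2 ≤ n)
    (X : Set (EuclideanSpace ℂ (Fin n))) (hX : IsOpen X)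
    (ρ : EuclideanSpace ℂ (Fin n) → ℝ)
    (hρ_smooth : ContDiffOn ℝ (⊤ : ℕ∞) ρ X)
    (hρ_exh : ∀ c : ℝ, IsCompact {z ∈ X | ρ z ≤ c})
    (M : ℝ)
    (hLevi : ∀ z ∈ X, M < ρ z → ∃ V : Submodule ℂ (EuclideanSpace ℂ (Fin n)),
      Module.finrank ℂ V = 2 ∧ ∀ w ∈ V, w ≠ 0 →
        0 < fderiv ℝ (fderiv ℝ ρ) z w w
            + fderiv ℝ (fderiv ℝ ρ) z (Complex.I • w) (Complex.I • w))
    -- `d` is a metric on `X` …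
    (d : EuclideanSpace ℂ (Fin n) → EuclideanSpace ℂ (Fin n) → ℝ)
    (hd_symm : ∀ x ∈ X, ∀ y ∈ X, d x y = d y x)
    (hd_eq : ∀ x ∈ X, ∀ y ∈ X, (d x y = 0 ↔ x = y))
    (hd_tri : ∀ x ∈ X, ∀ y ∈ X, ∀ z ∈ X, d x z ≤ d x y + d y z)
    -- … inducing the subspace topology of `X ⊆ ℂⁿ` …
    (hd_top₁ : ∀ x ∈ X, ∀ ε > (0 : ℝ), ∃ δ > (0 : ℝ),
      ∀ y ∈ X, dist x y < δ → d x y < ε)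
    (hd_top₂ : ∀ x ∈ X, ∀ ε > (0 : ℝ), ∃ δ > (0 : ℝ),
      ∀ y ∈ X, d x y < δ → dist x y < ε)
    -- … which is complete.
    (hd_complete : ∀ u : ℕ → EuclideanSpace ℂ (Fin n), (∀ k, u k ∈ X) →
      (∀ ε > (0 : ℝ), ∃ N : ℕ, ∀ m ≥ N, ∀ k ≥ N, d (u m) (u k) < ε) →
      ∃ x ∈ X, ∀ ε > (0 : ℝ), ∃ N : ℕ, ∀ k ≥ N, d (u k) x < ε)
    (ε r : ℝ) (hε : 0 < ε) (hr0 : 0 < r) (hr1 : r < 1)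
    (f : ℂ → EuclideanSpace ℂ (Fin n))
    (hf_cont : ContinuousOn f (closedBall (0 : ℂ) 1))
    (hf_hol : DifferentiableOn ℂ f (ball (0 : ℂ) 1))
    (hf_mem : ∀ ζ ∈ closedBall (0 : ℂ) 1, f ζ ∈ X)
    (hf_bd : ∀ ζ ∈ sphere (0 : ℂ) 1, M < ρ (f ζ)) :
    ∃ (g : ℂ → EuclideanSpace ℂ (Fin n)) (lam : ℝ),
      0 < lam ∧
      DifferentiableOn ℂ g (ball (0 : ℂ) 1) ∧
      (∀ ζ ∈ ball (0 : ℂ) 1, g ζ ∈ X) ∧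
      (∀ K : Set (EuclideanSpace ℂ (Fin n)), K ⊆ X → IsCompact K →
        IsCompact {ζ ∈ ball (0 : ℂ) 1 | g ζ ∈ K}) ∧
      (∀ ζ ∈ ball (0 : ℂ) r, d (g ζ) (f ζ) < ε) ∧
      g 0 = f 0 ∧ deriv g 0 = lam • deriv f 0 := by
  obtain ⟨g, hg, hgX, hproper, hclose, hg0, hgd⟩ := proper_disc_approximation_general hX
    (hρ_smooth.of_le (WithTop.coe_le_coe.2 le_top)) hρ_exh hLevi hd_symm hd_tri hd_top₁ hε hr1
    ⟨hf_cont, hf_hol, fun ζ hζ => hf_mem ζ (mem_closedBall_zero_iff.2 hζ)⟩ hf_bd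
  exact ⟨g, 1, one_pos, hg, hgX, hproper, hclose, hg0, by rw [one_smul, hgd]⟩
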